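/- arXiv:2401.08215 — 5 statements merged into one kernel-verified Lean document; each statement's English description precedes it below -/
import Mathlib

section
/- Let s_1, ..., s_m be generalized reflections on an n-dimensional vector space V over a field of characteristic 0, with reflection vectors α_1, ..., α_m that are linearly independent. If 0 ≤ d < m, then the intersection over i = 1, ..., m of the λ_i-eigenspaces of s_i acting on Λ^d V is zero (where λ_i ≠ 1 is the eigenvalue of s_i on α_i). -/
open ExteriorAlgebra Module

section Preamble

/-- A linear endomorphism is diagonalizable if its eigenspaces span the whole space. -/
def IsDiagonalizable {F V : Type*} [Field F] [AddCommGroup V] [Module F V]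
    (s : Module.End F V) : Prop :=
  (⨆ μ : F, Module.End.eigenspace s μ) = ⊤

/-- A generalized reflection: a diagonalizable endomorphism with `rank (s - id) = 1`. -/
def IsGenReflection {F V : Type*} [Field F] [AddCommGroup V] [Module F V]
    (s : Module.End F V) : Prop :=
  IsDiagonalizable s ∧ Module.finrank F (LinearMap.range (s - 1)) = 1

/-- A reflection vector of `s`: a nonzero vector in the image of `s - id`. -/
def IsReflVector {F V : Type*} [Field F] [AddCommGroup V] [Module F V]
    (s : Module.End F V) (a : V) : Prop :=
  a ≠ 0 ∧ a ∈ LinearMap.range (s - 1)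

lemma map_mem_exteriorPower {R M N : Type*} [CommRing R] [AddCommGroup M] [Module R M]
    [AddCommGroup N] [Module R N] (d : ℕ) (f : M →ₗ[R] N) {x : ExteriorAlgebra R M}
    (hx : x ∈ ⋀[R]^d M) : ExteriorAlgebra.map f x ∈ ⋀[R]^d N := by
  rw [← ιMulti_span_fixedDegree] at hx ⊢
  induction hx using Submodule.span_induction with
  | mem x hx =>
      obtain ⟨m, rfl⟩ := hx
      rw [map_apply_ιMulti]
      exact Submodule.subset_span ⟨_, rfl⟩
  | zero => simp
  | add x y _ _ hx hy => rw [map_add]; exact Submodule.add_mem _ hx hy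
  | smul c x _ hx => rw [map_smul]; exact Submodule.smul_mem _ _ hx

/-- The linear map induced on `d`-th exterior powers by a linear map. -/
def extMap {R M N : Type*} [CommRing R] [AddCommGroup M] [Module R M]
    [AddCommGroup N] [Module R N] (d : ℕ) (f : M →ₗ[R] N) :
    ⋀[R]^d M →ₗ[R] ⋀[R]^d N :=
  ((ExteriorAlgebra.map f).toLinearMap.domRestrict (⋀[R]^d M)).codRestrict (⋀[R]^d N)
    (fun x => map_mem_exteriorPower d f x.2)

/-- The wedge `v 0 ∧ ⋯ ∧ v (d-1)` as an element of the `d`-th exterior power. -/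
def wedge {R M : Type*} [CommRing R] [AddCommGroup M] [Module R M] (d : ℕ)
    (v : Fin d → M) : ⋀[R]^d M :=
  ⟨ιMulti R d v, ιMulti_range R d (Set.mem_range_self v)⟩

end Preamble

/-!
Let `s` be a generalized reflection with reflection vector `a` and eigenvalue `μ ≠ 1`. Since `s v`
differs from `v` by a multiple of `a`, and `a ∧ a = 0`, we have `a ∧ Λ(s) x = a ∧ x` for every `x`.
If moreover `Λ(s) x = μ x`, this forces `a ∧ x = 0`.

It remains to see that a nonzero `x ∈ ⋀^d V` cannot be annihilated by more than `d` independent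
vectors. Choose functionals `g i` dual to the `a i`. Contracting `a i ∧ x = 0` with `g i` gives
`x = a i ∧ (g i ⌋ x)`, and contracting `a j ∧ x = 0` with `g i`, `j ≠ i`, gives
`a j ∧ (g i ⌋ x) = 0`; so `g i ⌋ x` has degree `d - 1` and is annihilated by all the remaining
vectors, and one concludes by induction on `d`.
-/

open CliffordAlgebra (contractLeft contractLeft_ι contractLeft_ι_mul contractLeft_algebraMap)

section ExteriorAlgebra

variable {R M I : Type*} [CommRing R] [AddCommGroup M] [Module R M]

theorem ι_mul_map_eq_ι_mul {s : End R M} {a : M}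
    (hs : LinearMap.range (s - 1) ≤ Submodule.span R {a}) (x : ExteriorAlgebra R M) :
    ι R a * map s x = ι R a * x := by
  induction x using CliffordAlgebra.left_induction with
  | algebraMap r => rw [AlgHom.commutes]
  | add x y hx hy => rw [map_add, mul_add, mul_add, hx, hy]
  | ι_mul x v hx =>
    obtain ⟨c, hc⟩ := Submodule.mem_span_singleton.mp (hs ⟨v, rfl⟩)
    have ι_mul_ι_map : ι R a * ι R (s v) = -(ι R v * ι R a) := by
      have hsv : s v = v + c • a := by simp [hc]
      rw [hsv, map_add, map_smul, mul_add, mul_smul_comm, ι_sq_zero, smul_zero, add_zero]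
      exact eq_neg_of_add_eq_zero_left (ι_add_mul_swap a v)
    calc ι R a * map s (ι R v * x)
        = ι R a * ι R (s v) * map s x := by rw [map_mul, map_apply_ι, mul_assoc]
      _ = -(ι R v * (ι R a * map s x)) := by rw [ι_mul_ι_map, neg_mul, mul_assoc]
      _ = -(ι R v * ι R a) * x := by rw [hx, neg_mul, mul_assoc]
      _ = ι R a * (ι R v * x) := by
        rw [← eq_neg_of_add_eq_zero_left (ι_add_mul_swap a v), mul_assoc]

theorem ι_mul_eq_zero_of_map_eq_smul {s : End R M} {a : M}
    (hs : LinearMap.range (s - 1) ≤ Submodule.span R {a}) {μ : R} (hμ : IsUnit (μ - 1))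
    {x : ExteriorAlgebra R M} (hx : map s x = μ • x) : ι R a * x = 0 := by
  have smul_eq : μ • (ι R a * x) = ι R a * x := by
    rw [← mul_smul_comm, ← hx, ι_mul_map_eq_ι_mul hs]
  rwa [← hμ.smul_eq_zero, sub_smul, one_smul, sub_eq_zero]

theorem contractLeft_mem_exteriorPower (f : Dual R M) {d : ℕ} {x : ExteriorAlgebra R M}
    (hx : x ∈ ⋀[R]^(d + 1) M) : contractLeft (Q := 0) f x ∈ ⋀[R]^d M := by
  induction d generalizing x with
  | zero =>
    rw [exteriorPower, zero_add, pow_one] at hx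
    obtain ⟨v, rfl⟩ := hx
    rw [contractLeft_ι]
    exact Submodule.mem_one.mpr ⟨f v, rfl⟩
  | succ d ih =>
    rw [exteriorPower, pow_succ'] at hx
    induction hx using Submodule.mul_induction_on' with
    | add x _ y _ hx hy => rw [map_add]; exact add_mem hx hy
    | mem_mul_mem v hv y hy =>
      obtain ⟨v, rfl⟩ := hv
      rw [contractLeft_ι_mul]
      have ι_mul_mem : ι R v * contractLeft (Q := 0) f y ∈ ⋀[R]^(d + 1) M := by
        rw [exteriorPower, pow_succ']
        exact Submodule.mul_mem_mul ⟨v, rfl⟩ (ih hy)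
      exact sub_mem (Submodule.smul_mem _ _ hy) ι_mul_mem

theorem ι_mul_contractLeft_of_ι_mul_eq_zero (f : Dual R M) {a : M} {x : ExteriorAlgebra R M}
    (hx : ι R a * x = 0) : ι R a * contractLeft (Q := 0) f x = f a • x := by
  have h := contractLeft_ι_mul (Q := 0) (d := f) a x
  rw [hx, map_zero] at h
  exact (sub_eq_zero.mp h.symm).symm

theorem eq_zero_of_ι_mul_eq_zero_of_contractLeft_eq_zero {f : Dual R M} {a : M} (hfa : f a = 1)
    {x : ExteriorAlgebra R M} (hax : ι R a * x = 0) (hfx : contractLeft (Q := 0) f x = 0) :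
    x = 0 := by
  rw [← one_smul R x, ← hfa, ← ι_mul_contractLeft_of_ι_mul_eq_zero f hax, hfx, mul_zero]

theorem eq_zero_of_forall_ι_mul_eq_zero {a : I → M} {g : I → Dual R M}
    (hg₀ : Pairwise fun i j ↦ g i (a j) = 0) (hg₁ : ∀ i, g i (a i) = 1) {t : Set I} {d : ℕ}
    (hd : d < t.encard) {x : ExteriorAlgebra R M} (hx : x ∈ ⋀[R]^d M)
    (hax : ∀ i ∈ t, ι R (a i) * x = 0) : x = 0 := by
  induction d generalizing t x with
  | zero =>
    obtain ⟨i, hi⟩ : t.Nonempty := Set.encard_pos.mp hd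
    obtain ⟨r, rfl⟩ : ∃ r, algebraMap R _ r = x := Submodule.mem_one.mp (by simpa using hx)
    exact eq_zero_of_ι_mul_eq_zero_of_contractLeft_eq_zero (hg₁ i) (hax i hi)
      (contractLeft_algebraMap ..)
  | succ d ih =>
    obtain ⟨i, hi⟩ : t.Nonempty := Set.encard_pos.mp (pos_of_gt hd)
    have hd' : d < (t \ {i}).encard := by
      rwa [← Set.encard_sdiff_singleton_add_one hi, Nat.cast_succ,
        ENat.add_lt_add_iff_right ENat.one_ne_top] at hd
    refine eq_zero_of_ι_mul_eq_zero_of_contractLeft_eq_zero (hg₁ i) (hax i hi)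
      (ih hd' (contractLeft_mem_exteriorPower (g i) hx) fun j ⟨hj, hji⟩ ↦ ?_)
    rw [ι_mul_contractLeft_of_ι_mul_eq_zero (g i) (hax j hj), hg₀ (Ne.symm hji), zero_smul]

end ExteriorAlgebra

section LinearAlgebra

variable {K V I : Type*} [DivisionRing K] [AddCommGroup V] [Module K V]

theorem exists_pairwise_dual_eq_zero_one_of_linearIndependent {a : I → V}
    (ha : LinearIndependent K a) :
    ∃ g : I → Dual K V, Pairwise (fun i j ↦ g i (a j) = 0) ∧ ∀ i, g i (a i) = 1 := by
  obtain ⟨g, hg⟩ := LinearMap.exists_leftInverse_of_injective _ (LinearMap.ker_eq_bot.mpr ha)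
  have hga (j : I) : g (a j) = Finsupp.single j 1 := by
    simpa using LinearMap.congr_fun hg (Finsupp.single j 1)
  refine ⟨fun i ↦ Finsupp.lapply i ∘ₗ g, fun i j hij ↦ ?_, fun i ↦ ?_⟩
  · simp [hga, hij.symm]
  · simp [hga]

theorem eq_span_singleton_of_finrank_eq_one {W : Submodule K V} (hW : finrank K W = 1) {a : V}
    (ha : a ∈ W) (ha₀ : a ≠ 0) : W = Submodule.span K {a} := by
  have : FiniteDimensional K W := .of_finrank_pos (by simp [hW])
  symm
  apply Submodule.eq_of_le_of_finrank_eq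
  · simpa using ha
  · rw [finrank_span_singleton ha₀, hW]

end LinearAlgebra

theorem stmt_8_general {F V I : Type*} [Field F] [AddCommGroup V] [Module F V]
    {s : I → End F V} {a : I → V} (ha : LinearIndependent F a)
    (hs : ∀ i, LinearMap.range (s i - 1) ≤ Submodule.span F {a i})
    {μ : I → F} (hμ : ∀ i, μ i ≠ 1) {d : ℕ} (hd : d < ENat.card I) :
    ⨅ i, End.eigenspace (extMap d (s i)) (μ i) = ⊥ := by
  obtain ⟨g, hg₀, hg₁⟩ := exists_pairwise_dual_eq_zero_one_of_linearIndependent ha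
  refine (Submodule.eq_bot_iff _).mpr fun x hx ↦ Subtype.ext ?_
  refine eq_zero_of_forall_ι_mul_eq_zero (t := Set.univ) hg₀ hg₁ (by simpa using hd) x.2 ?_
  intro i _
  have map_eq_smul : map (s i) x = μ i • (x : ExteriorAlgebra F V) :=
    congrArg Subtype.val (End.mem_eigenspace_iff.mp ((Submodule.mem_iInf _).mp hx i))
  exact ι_mul_eq_zero_of_map_eq_smul (hs i) (sub_ne_zero.mpr (hμ i)).isUnit map_eq_smul

/-- If the reflection vectors `α₁, …, α_m` are linearly independent and `d < m`, then the
intersection of the `λᵢ`-eigenspaces of the `sᵢ` on `⋀^d V` is zero. -/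
theorem stmt_8 {F V : Type*} [Field F] [CharZero F] [AddCommGroup V] [Module F V]
    [FiniteDimensional F V] (n : ℕ) (hn : Module.finrank F V = n)
    (m : ℕ) (s : Fin m → Module.End F V) (hrefl : ∀ i, IsGenReflection (s i))
    (a : Fin m → V) (ha : ∀ i, IsReflVector (s i) (a i))
    (lam : Fin m → F) (hlam : ∀ i, lam i ≠ 1) (heig : ∀ i, s i (a i) = lam i • a i)
    (hind : LinearIndependent F a)
    (d : ℕ) (hd : d < m) :
    (⨅ i : Fin m, Module.End.eigenspace (extMap d (s i)) (lam i)) = ⊥ := by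
  refine stmt_8_general hind (fun i ↦ ?_) hlam (by simpa using hd)
  exact (eq_span_singleton_of_finrank_eq_one (hrefl i).2 (ha i).2 (ha i).1).le
end

section
/- Let s_1, ..., s_m be generalized reflections on an n-dimensional vector space V over a field of characteristic 0, with linearly independent reflection vectors α_1, ..., α_m, extended to a basis {α_1, ..., α_m, v_{m+1}, ..., v_n} of V. If m ≤ d ≤ n, then the intersection over i = 1, ..., m of the λ_i-eigenspaces of s_i on Λ^d V has basis {α_1 ∧ ... ∧ α_m ∧ v_{i_{m+1}} ∧ ... ∧ v_{i_d} : m+1 ≤ i_{m+1} < ... < i_d ≤ n}. In particular, for d = m this intersection is the one-dimensional line spanned by α_1 ∧ ... ∧ α_m. -/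
open ExteriorAlgebra Module

/-!
A generalized reflection `s` with reflection vector `a` and eigenvalue `l` moves every vector along
`a`. Complete `a` to a basis. On `⋀^d`, a basis wedge containing `a` is scaled by `l`, because the
other factors only change by multiples of `a`; and `s` does not change the coordinates at the wedges
avoiding `a`, so these coordinates vanish on an `l`-eigenvector when `l - 1` is regular. Hence the
`l`-eigenspace is spanned by the basis wedges containing `a`, and spans of subsets of one basis
intersect in the span of the common elements.
-/

section AlternatingMap

variable {R M N ι : Type*} [CommRing R] [AddCommGroup M] [Module R M] [AddCommGroup N] [Module R N]
  [Finite ι]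

lemma alternatingMap_eq_of_sub_mem_span_singleton (g : M [⋀^ι]→ₗ[R] N) {v w : ι → M} {k : ι}
    (hk : v k = w k) (hvw : ∀ j, v j - w j ∈ R ∙ w k) : g v = g w := by
  classical
  have := Fintype.ofFinite ι
  suffices h : ∀ S : Finset ι, g (S.piecewise v w) = g w by simpa using h Finset.univ
  intro S
  induction S using Finset.induction_on with
  | empty => simp
  | insert j S hj ih =>
    have hpj : S.piecewise v w j = w j := Finset.piecewise_eq_of_notMem _ _ _ hj
    have hpk : S.piecewise v w k = w k := by by_cases h : k ∈ S <;> simp [h, hk]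
    rw [Finset.piecewise_insert]
    rcases eq_or_ne j k with rfl | hjk
    · rwa [hk, ← hpj, Function.update_eq_self]
    · obtain ⟨c, hc⟩ := Submodule.mem_span_singleton.mp (hvw j)
      rw [← sub_add_cancel (v j) (w j), ← hc, g.map_update_add, g.map_update_smul, ← hpk,
        g.map_update_self _ hjk, smul_zero, zero_add, ← hpj, Function.update_eq_self, ih]

lemma alternatingMap_comp_eq_smul_of_range_sub_one_le (g : M [⋀^ι]→ₗ[R] N) {s : End R M}
    {w : ι → M} {k : ι} {l : R} (hs : LinearMap.range (s - 1) ≤ R ∙ w k) (hl : s (w k) = l • w k) :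
    g (s ∘ w) = l • g w := by
  classical
  calc g (s ∘ w) = g (Function.update (s ∘ w) k (l • w k)) := by
        rw [← hl, ← Function.comp_apply (f := s), Function.update_eq_self]
    _ = l • g (Function.update (s ∘ w) k (w k)) := g.map_update_smul _ _ _ _
    _ = l • g w := by
        congr 1
        refine alternatingMap_eq_of_sub_mem_span_singleton g (k := k) (by simp) fun j => ?_
        rcases eq_or_ne j k with rfl | hjk
        · simp
        · simpa [hjk] using hs ⟨w j, rfl⟩

end AlternatingMap

section Basis

variable {R M I : Type*}

lemma iInf_span_basis_image [Semiring R] [AddCommMonoid M] [Module R M] {κ : Type*}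
    (b : Basis I R M) (A : κ → Set I) :
    ⨅ k, Submodule.span R (b '' A k) = Submodule.span R (b '' ⋂ k, A k) := by
  ext x
  simp only [Submodule.mem_iInf, Basis.mem_span_image, Set.subset_iInter_iff]

lemma finrank_span_singleton_basis [Semiring R] [StrongRankCondition R] [AddCommMonoid M]
    [Module R M] (b : Basis I R M) (i : I) : finrank R (R ∙ b i) = 1 := by
  have := nontrivial_of_invariantBasisNumber R
  have hli : LinearIndependent R fun _ : Unit => b i :=
    b.linearIndependent.comp (fun _ => i) (Function.injective_of_subsingleton _)
  rw [← Set.range_const (ι := Unit), finrank_span_eq_card hli, Fintype.card_unit]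

lemma coord_comp_eq_of_range_sub_one_le [Ring R] [AddCommGroup M] [Module R M]
    (b : Basis I R M) {s : End R M} {i j : I} (hs : LinearMap.range (s - 1) ≤ R ∙ b i)
    (hij : i ≠ j) : b.coord j ∘ₗ s = b.coord j := by
  ext v
  obtain ⟨r, hr⟩ := Submodule.mem_span_singleton.mp (hs ⟨v, rfl⟩)
  have hv : s v = r • b i + v := by simp [hr]
  simp [hv, hij]

end Basis

section ExteriorPower

variable {R M : Type*} [CommRing R] [AddCommGroup M] [Module R M]

lemma extMap_eq_exteriorPower_map {N : Type*} [AddCommGroup N] [Module R N] (d : ℕ)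
    (f : M →ₗ[R] N) : extMap d f = exteriorPower.map d f := by
  refine exteriorPower.linearMap_ext (AlternatingMap.ext fun v => ?_)
  rw [LinearMap.compAlternatingMap_apply, LinearMap.compAlternatingMap_apply,
    exteriorPower.map_apply_ιMulti]
  exact Subtype.ext (ExteriorAlgebra.map_apply_ιMulti f v)

variable {I : Type*} [LinearOrder I] {d : ℕ}

lemma exteriorPower_ιMultiDual_map {N J : Type*} [AddCommGroup N] [Module R N] [LinearOrder J]
    (b : Basis I R M) (c : Basis J R N) {f : M →ₗ[R] N} {t : Set.powersetCard I d}
    {u : Set.powersetCard J d}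
    (hf : ∀ j, c.coord (Set.powersetCard.ofFinEmbEquiv.symm u j) ∘ₗ f =
      b.coord (Set.powersetCard.ofFinEmbEquiv.symm t j)) (x : ⋀[R]^d M) :
    exteriorPower.ιMultiDual R d c u (exteriorPower.map d f x) =
      exteriorPower.ιMultiDual R d b t x := by
  suffices exteriorPower.ιMultiDual R d c u ∘ₗ exteriorPower.map d f =
      exteriorPower.ιMultiDual R d b t from LinearMap.congr_fun this x
  refine exteriorPower.linearMap_ext (AlternatingMap.ext fun v => ?_)
  simp only [LinearMap.compAlternatingMap_apply, LinearMap.comp_apply,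
    exteriorPower.map_apply_ιMulti, exteriorPower.ιMultiDual_apply_ιMulti, Function.comp_apply,
    ← hf]

lemma eigenspace_exteriorPower_map_eq_span (b : Basis I R M) {s : End R M} {i : I} {l : R}
    (hs : LinearMap.range (s - 1) ≤ R ∙ b i) (hl : l - 1 ∈ nonZeroDivisors R)
    (hsi : s (b i) = l • b i) :
    End.eigenspace (exteriorPower.map d s) l =
      Submodule.span R (b.exteriorPower d '' {t | i ∈ t}) := by
  apply le_antisymm
  · intro x hx
    rw [Basis.mem_span_image]
    intro t ht
    by_contra hi
    have hfix : exteriorPower.ιMultiDual R d b t (exteriorPower.map d s x) =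
        exteriorPower.ιMultiDual R d b t x :=
      exteriorPower_ιMultiDual_map b b (fun j => coord_comp_eq_of_range_sub_one_le b hs fun h =>
        hi ((Set.powersetCard.mem_range_ofFinEmbEquiv_symm_iff_mem t i).mp ⟨j, h.symm⟩)) x
    rw [End.mem_eigenspace_iff.mp hx, map_smul, smul_eq_mul, ← sub_eq_zero, ← sub_one_mul,
      mul_left_mem_nonZeroDivisors_eq_zero_iff hl, ← exteriorPower.basis_repr_apply] at hfix
    exact Finsupp.mem_support_iff.mp ht hfix
  · rw [Submodule.span_le]
    rintro _ ⟨t, ht, rfl⟩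
    obtain ⟨k, rfl⟩ := (Set.powersetCard.mem_range_ofFinEmbEquiv_symm_iff_mem t i).mpr ht
    rw [SetLike.mem_coe, End.mem_eigenspace_iff, exteriorPower.basis_apply,
      exteriorPower.ιMulti_family, exteriorPower.map_apply_ιMulti]
    exact alternatingMap_comp_eq_smul_of_range_sub_one_le _ hs hsi

lemma iInf_eigenspace_extMap_eq_span {κ : Type*} (b : Basis I R M) {e : κ → I} {s : κ → End R M}
    {l : κ → R} (hs : ∀ k, LinearMap.range (s k - 1) ≤ R ∙ b (e k))
    (hl : ∀ k, l k - 1 ∈ nonZeroDivisors R) (hse : ∀ k, s k (b (e k)) = l k • b (e k)) :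
    ⨅ k, End.eigenspace (extMap d (s k)) (l k) =
      Submodule.span R (b.exteriorPower d '' {t | ∀ k, e k ∈ t}) := by
  simp only [extMap_eq_exteriorPower_map, eigenspace_exteriorPower_map_eq_span b (hs _) (hl _)
    (hse _), iInf_span_basis_image, Set.iInter_ofPred]

lemma powersetCard_setOf_forall_mem_eq_singleton (e : Fin d ↪o I) :
    {t : Set.powersetCard I d | ∀ k, e k ∈ t} = {Set.powersetCard.ofFinEmbEquiv e} := by
  refine Set.eq_singleton_iff_unique_mem.mpr ⟨fun k => by simp, fun t ht => ?_⟩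
  refine (Subtype.ext (Finset.eq_of_subset_of_card_le (fun i hi => ?_) ?_)).symm
  · obtain ⟨k, rfl⟩ := (Set.powersetCard.mem_ofFinEmbEquiv_iff_mem_range e i).mp hi
    exact ht k
  · rw [t.2, (Set.powersetCard.ofFinEmbEquiv e).2]

lemma exteriorPower_basis_eq_wedge (b : Basis I R M) (t : Set.powersetCard I d) :
    b.exteriorPower d t = wedge d (fun j => b (t.1.orderIsoOfFin t.2 j)) := by
  rw [exteriorPower.basis_apply]
  rfl

lemma exists_basis_span_image_exteriorPower (b : Basis I R M) (p : Finset I → Prop) :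
    ∃ c : Basis {t : Finset I // t.card = d ∧ p t} R
        (Submodule.span R (b.exteriorPower d '' {t | p t.1})),
      ∀ t, (c t).1 = wedge d (fun j => b (t.1.orderIsoOfFin t.prop.1 j)) := by
  let e : {t : Finset I // t.card = d ∧ p t} → Set.powersetCard I d := fun t => ⟨t.1, t.2.1⟩
  have he : Function.Injective e := fun t u h => Subtype.ext (Subtype.mk.inj h)
  have hrange : Set.range e = {t | p t.1} :=
    Set.ext fun t => ⟨by rintro ⟨u, rfl⟩; exact u.2.2, fun h => ⟨⟨t.1, t.2, h⟩, rfl⟩⟩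
  have hspan : Submodule.span R (Set.range (b.exteriorPower d ∘ e)) =
      Submodule.span R (b.exteriorPower d '' {t | p t.1}) := by
    rw [Set.range_comp, hrange]
  refine ⟨(Basis.span ((b.exteriorPower d).linearIndependent.comp e he)).map
    (LinearEquiv.ofEq _ _ hspan), fun t => ?_⟩
  rw [Basis.map_apply, LinearEquiv.coe_ofEq_apply, Basis.span_apply]
  exact exteriorPower_basis_eq_wedge b (e t)

end ExteriorPower

lemma IsGenReflection.range_sub_one_eq_span_singleton {F V : Type*} [Field F] [AddCommGroup V]
    [Module F V] {s : End F V} (hs : IsGenReflection s) {a : V} (ha : IsReflVector s a) :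
    LinearMap.range (s - 1) = F ∙ a :=
  eq_span_singleton_of_mem_of_finrank_eq_one hs.2 ha.2 ha.1

theorem stmt_9_general {R M I : Type*} [CommRing R] [Nontrivial R] [AddCommGroup M] [Module R M]
    [LinearOrder I] (b : Basis I R M) {m : ℕ} (e : Fin m ↪o I) (s : Fin m → End R M)
    (hs : ∀ i, LinearMap.range (s i - 1) ≤ R ∙ b (e i)) (lam : Fin m → R)
    (hlam : ∀ i, lam i - 1 ∈ nonZeroDivisors R) (heig : ∀ i, s i (b (e i)) = lam i • b (e i))
    (d : ℕ) :
    (∃ c : Basis {t : Finset I // t.card = d ∧ ∀ i, e i ∈ t} R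
        ↥(⨅ i, End.eigenspace (extMap d (s i)) (lam i)),
      ∀ t, (c t).1 = wedge d (fun j => b (t.1.orderIsoOfFin t.prop.1 j))) ∧
    ∀ h : d = m,
      (⨅ i, End.eigenspace (extMap d (s i)) (lam i)) =
        Submodule.span R {wedge d (fun j : Fin d => b (e (Fin.cast h j)))} ∧
      Module.finrank R ↥(⨅ i, End.eigenspace (extMap d (s i)) (lam i)) = 1 := by
  rw [iInf_eigenspace_extMap_eq_span b hs hlam heig]
  refine ⟨exists_basis_span_image_exteriorPower b fun t => ∀ i, e i ∈ t, ?_⟩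
  rintro rfl
  rw [powersetCard_setOf_forall_mem_eq_singleton, Set.image_singleton]
  refine ⟨?_, finrank_span_singleton_basis _ _⟩
  rw [exteriorPower.basis_apply, exteriorPower.ιMulti_family, Equiv.symm_apply_apply]
  rfl

/-- If `m ≤ d ≤ n`, the intersection of the `λᵢ`-eigenspaces of the reflections `sᵢ` on
`⋀^d V` has basis the wedges `α₁ ∧ ⋯ ∧ α_m ∧ v_{i_{m+1}} ∧ ⋯ ∧ v_{i_d}`; in particular for
`d = m` it is the one-dimensional line spanned by `α₁ ∧ ⋯ ∧ α_m`. -/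
theorem stmt_9 {F V : Type*} [Field F] [CharZero F] [AddCommGroup V] [Module F V]
    [FiniteDimensional F V] (n : ℕ) (hn : Module.finrank F V = n)
    (m : ℕ) (hmn : m ≤ n) (s : Fin m → Module.End F V) (hrefl : ∀ i, IsGenReflection (s i))
    (a : Fin m → V) (ha : ∀ i, IsReflVector (s i) (a i))
    (lam : Fin m → F) (hlam : ∀ i, lam i ≠ 1) (heig : ∀ i, s i (a i) = lam i • a i)
    (hind : LinearIndependent F a)
    (b : Basis (Fin n) F V) (hb : ∀ i : Fin m, b (Fin.castLE hmn i) = a i)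
    (d : ℕ) (hmd : m ≤ d) (hdn : d ≤ n) :
    (∃ c : Basis {t : Finset (Fin n) // t.card = d ∧ ∀ i : Fin m, Fin.castLE hmn i ∈ t} F
        ↥(⨅ i : Fin m, Module.End.eigenspace (extMap d (s i)) (lam i)),
      ∀ t, (c t).1 = wedge d (fun j => b (t.1.orderIsoOfFin t.prop.1 j))) ∧
    ∀ h : d = m,
      (⨅ i : Fin m, Module.End.eigenspace (extMap d (s i)) (lam i)) =
        Submodule.span F {wedge d (fun j : Fin d => a (Fin.cast h j))} ∧
      Module.finrank F
        ↥(⨅ i : Fin m, Module.End.eigenspace (extMap d (s i)) (lam i)) = 1 := by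
  obtain rfl : a = fun i => b (Fin.castLE hmn i) := funext fun i => (hb i).symm
  exact stmt_9_general b (Fin.castLEOrderEmb hmn) s
    (fun i => ((hrefl i).range_sub_one_eq_span_singleton (ha i)).le) lam
    (fun i => mem_nonZeroDivisors_of_ne_zero (sub_ne_zero.mpr (hlam i))) heig d
end

section
/- Let s_1, ..., s_{m+1} be generalized reflections on a vector space V over a field of characteristic 0, with reflection vectors α_1, ..., α_{m+1} and eigenvalues λ_1, ..., λ_{m+1}. Suppose α_1, ..., α_m are linearly independent, α_{m+1} lies in their span, and m ≤ d. Then the intersection of the λ_i-eigenspaces of s_i on Λ^d V for i = 1, ..., m is nonzero and is contained in the λ_{m+1}-eigenspace of s_{m+1}; hence the intersection over i = 1, ..., m+1 equals the intersection over i = 1, ..., m. -/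
open ExteriorAlgebra Module

/-!
A generalized reflection has the form `s v = v + f v • a`, and on the exterior algebra such a map
acts by `x ↦ x + a ∧ (f ⌋ x) = (1 + f a) • x - f ⌋ (a ∧ x)`, where `1 + f a` is its eigenvalue.
Since `a ∧ (f ⌋ (a ∧ x)) = f a • (a ∧ x)` and `f a ≠ 0`, the eigenspace of `s` on `⋀^d V` for that
eigenvalue is `{x | a ∧ x = 0}`. For fixed `x` the condition `a ∧ x = 0` is linear in `a`, so it
passes from a family of reflection vectors to its span, and it holds for every member of the family
when `x` is the wedge of a linearly independent family containing it.
-/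

section ExteriorAnnihilator

variable {R M : Type*} [CommRing R] [AddCommGroup M] [Module R M]

/-- The exterior annihilator of `x`: the submodule of vectors `v` with `v ∧ x = 0`. A generalized
reflection enters the eigenspace conditions only through membership of its reflection vector in
this submodule. -/
def exteriorAnnihilator (x : ExteriorAlgebra R M) : Submodule R M :=
  LinearMap.ker (LinearMap.mulRight R x ∘ₗ ι R)

lemma mem_exteriorAnnihilator {x : ExteriorAlgebra R M} {v : M} :
    v ∈ exteriorAnnihilator x ↔ ι R v * x = 0 :=
  Iff.rfl

lemma range_subset_exteriorAnnihilator_wedge {d : ℕ} (v : Fin d → M) :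
    Set.range v ⊆ exteriorAnnihilator (wedge (R := R) d v : ExteriorAlgebra R M) :=
  Set.range_subset_iff.2 (ι_mul_prod_list v)

end ExteriorAnnihilator

section Transvection

open CliffordAlgebra (contractLeft)

variable {R M : Type*} [CommRing R] [AddCommGroup M] [Module R M]

lemma exteriorAlgebra_ι_mul_ι_mul_self (a : M) (x : ExteriorAlgebra R M) :
    ι R a * (ι R a * x) = 0 := by
  rw [← mul_assoc, ι_sq_zero, zero_mul]

lemma exteriorAlgebra_ι_mul_ι_mul_anticomm (a b : M) (x : ExteriorAlgebra R M) :
    ι R a * (ι R b * x) = -(ι R b * (ι R a * x)) := by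
  rw [← mul_assoc, ← mul_assoc, ← neg_mul, eq_neg_of_add_eq_zero_left (ι_add_mul_swap a b)]

lemma exteriorAlgebra_contractLeft_ι_mul (f : Dual R M) (a : M) (x : ExteriorAlgebra R M) :
    contractLeft f (ι R a * x) = f a • x - ι R a * contractLeft f x :=
  CliffordAlgebra.contractLeft_ι_mul (Q := 0) (d := f) a x

lemma exteriorAlgebra_map_transvection (f : Dual R M) (a : M) (x : ExteriorAlgebra R M) :
    map (LinearMap.transvection f a) x = x + ι R a * contractLeft f x := by
  induction x using CliffordAlgebra.left_induction with
  | algebraMap r =>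
    rw [CliffordAlgebra.contractLeft_algebraMap, mul_zero, add_zero]
    exact (map _).commutes r
  | add x y hx hy => rw [map_add, hx, hy, map_add, mul_add, add_add_add_comm]
  | ι_mul x v hx =>
    calc map (LinearMap.transvection f a) (ι R v * x)
        = (ι R v + f v • ι R a) * (x + ι R a * contractLeft f x) := by
          rw [map_mul, hx, map_apply_ι, LinearMap.transvection.apply, map_add, map_smul]
      _ = ι R v * x + ι R a * (f v • x - ι R v * contractLeft f x) := by
          rw [add_mul, mul_add, mul_add, smul_mul_assoc, smul_mul_assoc,
            exteriorAlgebra_ι_mul_ι_mul_self, smul_zero, exteriorAlgebra_ι_mul_ι_mul_anticomm v a,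
            mul_sub, mul_smul_comm]
          abel
      _ = ι R v * x + ι R a * contractLeft f (ι R v * x) := by
          rw [exteriorAlgebra_contractLeft_ι_mul]

lemma exteriorAlgebra_map_transvection_eq_smul_sub (f : Dual R M) (a : M)
    (x : ExteriorAlgebra R M) :
    map (LinearMap.transvection f a) x = (1 + f a) • x - contractLeft f (ι R a * x) := by
  rw [exteriorAlgebra_map_transvection, exteriorAlgebra_contractLeft_ι_mul, add_smul, one_smul]
  abel

lemma exteriorAlgebra_contractLeft_ι_mul_eq_zero_iff {f : Dual R M} {a : M} (hfa : IsUnit (f a))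
    {x : ExteriorAlgebra R M} : contractLeft f (ι R a * x) = 0 ↔ ι R a * x = 0 := by
  refine ⟨fun hx => ?_, fun hx => by rw [hx, map_zero]⟩
  have hsmul := exteriorAlgebra_contractLeft_ι_mul f a (ι R a * x)
  rw [exteriorAlgebra_ι_mul_ι_mul_self, map_zero, hx, mul_zero, sub_zero] at hsmul
  exact hfa.smul_eq_zero.1 hsmul.symm

lemma mem_eigenspace_extMap_transvection_iff {f : Dual R M} {a : M} (hfa : IsUnit (f a)) {d : ℕ}
    {x : ⋀[R]^d M} :
    x ∈ End.eigenspace (extMap d (LinearMap.transvection f a)) (1 + f a) ↔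
      a ∈ exteriorAnnihilator (x : ExteriorAlgebra R M) := by
  rw [End.mem_eigenspace_iff, Subtype.ext_iff, mem_exteriorAnnihilator,
    ← exteriorAlgebra_contractLeft_ι_mul_eq_zero_iff hfa]
  change map _ (x : ExteriorAlgebra R M) = (1 + f a) • (x : ExteriorAlgebra R M) ↔ _
  rw [exteriorAlgebra_map_transvection_eq_smul_sub, sub_eq_self]

end Transvection

lemma exists_eq_transvection_of_range_sub_one_le_span {R M : Type*} [Ring R] [IsDomain R]
    [AddCommGroup M] [Module R M] [IsTorsionFree R M] {s : End R M} {a : M} (ha : a ≠ 0)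
    (hs : LinearMap.range (s - 1) ≤ Submodule.span R {a}) :
    ∃ f : Dual R M, s = LinearMap.transvection f a := by
  let coeff : Dual R M := (LinearEquiv.coord R M a ha).toLinearMap ∘ₗ
    (s - 1).codRestrict _ fun v => hs ⟨v, rfl⟩
  have hcoeff (v : M) : coeff v • a = (s - 1) v := LinearEquiv.coord_apply_smul R M a ha _
  exact ⟨coeff, LinearMap.ext fun v => by simp [LinearMap.transvection.apply, hcoeff]⟩

universe u in
lemma exists_linearIndependent_range_subset_range {R : Type*} {M : Type u} [Ring R]
    [AddCommGroup M] [Module R M] [HasRankNullity.{u} R] [StrongRankCondition R]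
    {m d : ℕ} {a : Fin m → M} (ha : LinearIndependent R a) (hmd : m ≤ d)
    (hd : d ≤ Module.rank R M) :
    ∃ v : Fin d → M, LinearIndependent R v ∧ Set.range a ⊆ Set.range v := by
  induction d, hmd using Nat.le_induction with
  | base => exact ⟨a, ha, subset_rfl⟩
  | succ d _ ih =>
    have hlt : (d : Cardinal) < Module.rank R M := (Nat.cast_lt.2 d.lt_succ_self).trans_le hd
    obtain ⟨v, hv, hav⟩ := ih hlt.le
    obtain ⟨x, hx⟩ := exists_linearIndependent_cons_of_lt_rank hv hlt
    exact ⟨Fin.cons x v, hx, hav.trans (Fin.range_cons x v ▸ Set.subset_insert x _)⟩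

section Reflections

variable {F V : Type*} [Field F] [AddCommGroup V] [Module F V]

lemma wedge_ne_zero {d : ℕ} {v : Fin d → V} (hv : LinearIndependent F v) :
    wedge (R := F) d v ≠ 0 := by
  let allIndices : Set.powersetCard (Fin d) d :=
    Set.powersetCard.ofFinEmbEquiv (RelEmbedding.refl _)
  have h := (exteriorPower.ιMulti_family_linearIndependent_field (n := d) hv).ne_zero allIndices
  rwa [exteriorPower.ιMulti_family, Equiv.symm_apply_apply] at h

lemma IsGenReflection.mem_eigenspace_extMap_iff {s : End F V} (hs : IsGenReflection s) {a : V}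
    (ha : IsReflVector s a) {c : F} (hc : c ≠ 1) (hsa : s a = c • a) {d : ℕ} {x : ⋀[F]^d V} :
    x ∈ End.eigenspace (extMap d s) c ↔ a ∈ exteriorAnnihilator (x : ExteriorAlgebra F V) := by
  obtain ⟨f, rfl⟩ := exists_eq_transvection_of_range_sub_one_le_span ha.1
    (eq_span_singleton_of_mem_of_finrank_eq_one hs.2 ha.2 ha.1).le
  obtain rfl : 1 + f a = c := smul_left_injective F ha.1 <| by
    simpa only [add_smul, one_smul, LinearMap.transvection.apply] using hsa
  exact mem_eigenspace_extMap_transvection_iff (by simpa using hc)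

lemma mem_iInf_eigenspace_extMap_iff {κ : Sort*} {s : κ → End F V}
    (hs : ∀ i, IsGenReflection (s i)) {a : κ → V} (ha : ∀ i, IsReflVector (s i) (a i))
    {c : κ → F} (hc : ∀ i, c i ≠ 1) (hsa : ∀ i, s i (a i) = c i • a i) {d : ℕ} {x : ⋀[F]^d V} :
    x ∈ ⨅ i, End.eigenspace (extMap d (s i)) (c i) ↔
      Submodule.span F (Set.range a) ≤ exteriorAnnihilator (x : ExteriorAlgebra F V) := by
  rw [Submodule.mem_iInf, Submodule.span_le, Set.range_subset_iff]
  exact forall_congr' fun i => (hs i).mem_eigenspace_extMap_iff (ha i) (hc i) (hsa i)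

lemma iInf_eigenspace_extMap_ne_bot {m : ℕ} {s : Fin m → End F V}
    (hs : ∀ i, IsGenReflection (s i)) {a : Fin m → V} (ha : ∀ i, IsReflVector (s i) (a i))
    {c : Fin m → F} (hc : ∀ i, c i ≠ 1) (hsa : ∀ i, s i (a i) = c i • a i)
    (hind : LinearIndependent F a) {d : ℕ} (hmd : m ≤ d) (hd : d ≤ Module.rank F V) :
    (⨅ i, End.eigenspace (extMap d (s i)) (c i)) ≠ ⊥ := by
  obtain ⟨v, hv, hav⟩ := exists_linearIndependent_range_subset_range hind hmd hd
  refine (Submodule.ne_bot_iff _).2 ⟨wedge d v, ?_, wedge_ne_zero hv⟩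
  rw [mem_iInf_eigenspace_extMap_iff hs ha hc hsa, Submodule.span_le]
  exact hav.trans (range_subset_exteriorAnnihilator_wedge v)

lemma iInf_eigenspace_extMap_le {κ : Sort*} {s : κ → End F V} (hs : ∀ i, IsGenReflection (s i))
    {a : κ → V} (ha : ∀ i, IsReflVector (s i) (a i)) {c : κ → F} (hc : ∀ i, c i ≠ 1)
    (hsa : ∀ i, s i (a i) = c i • a i) {t : End F V} (ht : IsGenReflection t) {b : V}
    (hb : IsReflVector t b) {e : F} (he : e ≠ 1) (htb : t b = e • b)
    (hspan : b ∈ Submodule.span F (Set.range a)) (d : ℕ) :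
    (⨅ i, End.eigenspace (extMap d (s i)) (c i)) ≤ End.eigenspace (extMap d t) e := fun _ hx =>
  (ht.mem_eigenspace_extMap_iff hb he htb).2
    ((mem_iInf_eigenspace_extMap_iff hs ha hc hsa).1 hx hspan)

end Reflections

theorem stmt_10_general {F V : Type*} [Field F] [AddCommGroup V] [Module F V]
    (m : ℕ) (s : Fin (m + 1) → Module.End F V) (hrefl : ∀ i, IsGenReflection (s i))
    (a : Fin (m + 1) → V) (ha : ∀ i, IsReflVector (s i) (a i))
    (lam : Fin (m + 1) → F) (hlam : ∀ i, lam i ≠ 1) (heig : ∀ i, s i (a i) = lam i • a i)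
    (hind : LinearIndependent F (fun i : Fin m => a i.castSucc))
    (hspan : a (Fin.last m) ∈ Submodule.span F (Set.range (fun i : Fin m => a i.castSucc)))
    (d : ℕ) (hmd : m ≤ d) (hd : d ≤ Module.rank F V) :
    (⨅ i : Fin m, Module.End.eigenspace (extMap d (s i.castSucc)) (lam i.castSucc)) ≠ ⊥ ∧
    (⨅ i : Fin m, Module.End.eigenspace (extMap d (s i.castSucc)) (lam i.castSucc)) ≤
      Module.End.eigenspace (extMap d (s (Fin.last m))) (lam (Fin.last m)) ∧
    (⨅ i : Fin (m + 1), Module.End.eigenspace (extMap d (s i)) (lam i)) =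
      (⨅ i : Fin m, Module.End.eigenspace (extMap d (s i.castSucc)) (lam i.castSucc)) := by
  have hle := iInf_eigenspace_extMap_le (fun i : Fin m => hrefl i.castSucc) (fun i => ha i.castSucc)
    (fun i => hlam i.castSucc) (fun i => heig i.castSucc) (hrefl (Fin.last m)) (ha _) (hlam _)
    (heig _) hspan d
  refine ⟨?_, hle, le_antisymm ?_ ?_⟩
  · exact iInf_eigenspace_extMap_ne_bot (fun i => hrefl i.castSucc) (fun i => ha i.castSucc)
      (fun i => hlam i.castSucc) (fun i => heig i.castSucc) hind hmd hd
  · exact le_iInf fun i => iInf_le _ i.castSucc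
  · exact le_iInf (Fin.lastCases hle (iInf_le _))

/-- If `α₁, …, α_m` are linearly independent, `α_{m+1}` lies in their span and `m ≤ d`, then
the intersection of the first `m` eigenspaces on `⋀^d V` is nonzero, is contained in the
`λ_{m+1}`-eigenspace of `s_{m+1}`, and equals the intersection of all `m+1` eigenspaces. -/
theorem stmt_10 {F V : Type*} [Field F] [CharZero F] [AddCommGroup V] [Module F V]
    [FiniteDimensional F V] (n : ℕ) (hn : Module.finrank F V = n)
    (m : ℕ) (s : Fin (m + 1) → Module.End F V) (hrefl : ∀ i, IsGenReflection (s i))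
    (a : Fin (m + 1) → V) (ha : ∀ i, IsReflVector (s i) (a i))
    (lam : Fin (m + 1) → F) (hlam : ∀ i, lam i ≠ 1) (heig : ∀ i, s i (a i) = lam i • a i)
    (hind : LinearIndependent F (fun i : Fin m => a i.castSucc))
    (hspan : a (Fin.last m) ∈ Submodule.span F (Set.range (fun i : Fin m => a i.castSucc)))
    (d : ℕ) (hmd : m ≤ d) (hdn : d ≤ n) :
    (⨅ i : Fin m, Module.End.eigenspace (extMap d (s i.castSucc)) (lam i.castSucc)) ≠ ⊥ ∧
    (⨅ i : Fin m, Module.End.eigenspace (extMap d (s i.castSucc)) (lam i.castSucc)) ≤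
      Module.End.eigenspace (extMap d (s (Fin.last m))) (lam (Fin.last m)) ∧
    (⨅ i : Fin (m + 1), Module.End.eigenspace (extMap d (s i)) (lam i)) =
      (⨅ i : Fin m, Module.End.eigenspace (extMap d (s i.castSucc)) (lam i.castSucc)) :=
  stmt_10_general m s hrefl a ha lam hlam heig hind hspan d hmd
    (by rw [← finrank_eq_rank, hn]; exact_mod_cast hdn)
end

section
/- Let W be a group with finite generating set S = {s_1, ..., s_k}, and let (V_1, ρ_1), (V_2, ρ_2) be irreducible reflection representations of (W, S) over a field of characteristic 0 of dimensions n_1, n_2. Suppose Λ^{d_1} V_1 ≅ Λ^{d_2} V_2 as W-modules for some 1 ≤ d_ι ≤ n_ι - 1 (ι = 1, 2). Then d_1 = d_2, n_1 = n_2, and for each i, the eigenvalue of ρ_1(s_i) on its reflection vector equals the eigenvalue of ρ_2(s_i) on its reflection vector. -/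
open ExteriorAlgebra Module

/-!
An endomorphism `f` with reflection vector of eigenvalue `l ≠ 1` has an eigenbasis with eigenvalues
`l, 1, …, 1`. Wedges of `d + 1` of these `m + 1` eigenvectors contain the first one or not, so
`⋀^(d+1) f` has eigenvalue `l` with multiplicity `m.choose d` and eigenvalue `1` with multiplicity
`m.choose (d + 1)`. The characteristic polynomial therefore determines `l` and these two adjacent
binomial coefficients, and those determine `d` and `m`. Since every line is invariant under the
trivial group, irreducibility in dimension at least two supplies a generator to apply this to.
-/

section Binomial

lemma choose_add_lt_choose_add {p₁ p₂ q₁ q₂ : ℕ} (hp : p₁ < p₂) (hq : q₁ ≤ q₂) (hq₁ : 0 < q₁) :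
    (p₁ + q₁).choose p₁ < (p₂ + q₂).choose p₂ := by
  have hmono : StrictMono fun p => (p + q₁).choose p := by
    refine strictMono_nat_of_lt_succ fun p => ?_
    have hpos : 0 < (p + q₁).choose (p + 1) := Nat.choose_pos (by omega)
    calc (p + q₁).choose p < (p + q₁).choose p + (p + q₁).choose (p + 1) := by omega
      _ = (p + 1 + q₁).choose (p + 1) := by rw [Nat.add_right_comm, Nat.choose_succ_succ]
  calc (p₁ + q₁).choose p₁ < (p₂ + q₁).choose p₂ := hmono hp
    _ ≤ (p₂ + q₂).choose p₂ := Nat.choose_le_choose _ (by omega)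

lemma eq_and_eq_of_choose_eq_of_choose_succ_eq {m₁ m₂ a₁ a₂ : ℕ} (h₁ : a₁ < m₁) (h₂ : a₂ < m₂)
    (h : m₁.choose a₁ = m₂.choose a₂) (hsucc : m₁.choose (a₁ + 1) = m₂.choose (a₂ + 1)) :
    a₁ = a₂ ∧ m₁ = m₂ := by
  wlog hle : a₁ ≤ a₂ generalizing m₁ m₂ a₁ a₂
  · exact (this h₂ h₁ h.symm hsucc.symm (by omega)).imp Eq.symm Eq.symm
  have hratio : (m₁ - a₁) * (a₂ + 1) = (m₂ - a₂) * (a₁ + 1) := by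
    refine Nat.eq_of_mul_eq_mul_left (Nat.choose_pos h₁.le) ?_
    calc m₁.choose a₁ * ((m₁ - a₁) * (a₂ + 1))
        = m₁.choose (a₁ + 1) * (a₁ + 1) * (a₂ + 1) := by rw [Nat.choose_succ_right_eq, mul_assoc]
      _ = m₂.choose (a₂ + 1) * (a₂ + 1) * (a₁ + 1) := by rw [hsucc, mul_right_comm]
      _ = m₁.choose a₁ * ((m₂ - a₂) * (a₁ + 1)) := by
        rw [Nat.choose_succ_right_eq, ← h, mul_assoc]
  rcases hle.eq_or_lt with rfl | hlt
  · have := Nat.eq_of_mul_eq_mul_right a₁.succ_pos hratio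
    omega
  · have hcodim : m₁ - a₁ ≤ m₂ - a₂ := by
      refine le_of_mul_le_mul_right ?_ a₁.succ_pos
      calc (m₁ - a₁) * (a₁ + 1) ≤ (m₁ - a₁) * (a₂ + 1) := by gcongr
        _ = (m₂ - a₂) * (a₁ + 1) := hratio
    have hpascal : (m₁ + 1).choose (a₁ + 1) = (m₂ + 1).choose (a₂ + 1) := by
      rw [Nat.choose_succ_succ, Nat.choose_succ_succ, Nat.succ_eq_add_one, h, hsucc]
    have hchoose_lt := choose_add_lt_choose_add (Nat.succ_lt_succ hlt) hcodim (Nat.sub_pos_of_lt h₁)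
    rw [show a₁ + 1 + (m₁ - a₁) = m₁ + 1 by omega, show a₂ + 1 + (m₂ - a₂) = m₂ + 1 by omega]
      at hchoose_lt
    exact absurd hpascal hchoose_lt.ne

end Binomial

section PowersetCard

variable {ι M : Type*} [DecidableEq ι] [CommMonoid M]

lemma prod_powersetCard_succ_insert_ite_mem {a : ι} {s : Finset ι} (ha : a ∉ s) (n : ℕ) (x y : M) :
    ∏ t ∈ (insert a s).powersetCard (n + 1), (if a ∈ t then x else y) =
      x ^ s.card.choose n * y ^ s.card.choose (n + 1) := by
  have hmem : ∀ {k t}, t ∈ s.powersetCard k → a ∉ t := fun ht hat =>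
    ha ((Finset.mem_powersetCard.mp ht).1 hat)
  have hdisj : Disjoint (s.powersetCard (n + 1)) ((s.powersetCard n).image (insert a)) := by
    rw [Finset.disjoint_left]
    intro t ht ht'
    obtain ⟨u, -, rfl⟩ := Finset.mem_image.mp ht'
    exact hmem ht (Finset.mem_insert_self a u)
  have hinj : Set.InjOn (insert a) (s.powersetCard n : Set (Finset ι)) := fun t ht u hu htu => by
    rw [← Finset.erase_insert (hmem ht), htu, Finset.erase_insert (hmem hu)]
  rw [Finset.powersetCard_succ_insert ha, Finset.prod_union hdisj, Finset.prod_image hinj,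
    Finset.prod_congr rfl fun t ht => if_neg (hmem ht),
    Finset.prod_congr rfl fun t _ => if_pos (Finset.mem_insert_self a t),
    Finset.prod_const, Finset.prod_const, Finset.card_powersetCard, Finset.card_powersetCard,
    mul_comm]

end PowersetCard

section Charpoly

open Polynomial

lemma charpoly_eq_prod_of_apply_basis_eq_smul {R M ι : Type*} [CommRing R] [AddCommGroup M]
    [Module R M] [Module.Free R M] [Module.Finite R M] [Fintype ι] (b : Basis ι R M)
    {f : End R M} {c : ι → R} (hf : ∀ i, f (b i) = c i • b i) :
    f.charpoly = ∏ i, (X - C (c i)) := by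
  classical
  have hdiag : LinearMap.toMatrix b b f = Matrix.diagonal c := by
    ext i j
    rw [LinearMap.toMatrix_apply, hf, map_smul, Basis.repr_self, Matrix.diagonal_apply]
    by_cases hij : i = j <;> simp [hij]
  rw [← LinearMap.charpoly_toMatrix f b, hdiag, Matrix.charpoly_diagonal]

lemma eq_and_eq_and_eq_of_X_sub_C_pow_mul_eq {R : Type*} [CommRing R] [IsDomain R] {x y z : R}
    {p q p' q' : ℕ} (hy : y ≠ x) (hz : z ≠ x) (hq : q ≠ 0)
    (h : (X - C y) ^ q * (X - C x) ^ p = (X - C z) ^ q' * (X - C x) ^ p') :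
    y = z ∧ q = q' ∧ p = p' := by
  classical
  have hroots_mul (w : R) (m n : ℕ) : ((X - C w) ^ m * (X - C x) ^ n).roots =
      Multiset.replicate m w + Multiset.replicate n x := by
    rw [roots_mul (mul_ne_zero (pow_ne_zero _ (X_sub_C_ne_zero w))
      (pow_ne_zero _ (X_sub_C_ne_zero x))), roots_pow, roots_pow, roots_X_sub_C, roots_X_sub_C,
      Multiset.nsmul_singleton, Multiset.nsmul_singleton]
  have hroots : Multiset.replicate q y + Multiset.replicate p x =
      Multiset.replicate q' z + Multiset.replicate p' x := by
    rw [← hroots_mul, ← hroots_mul, h]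
  have hp : p = p' := by
    simpa [Multiset.count_replicate, hy, hz] using congrArg (Multiset.count x) hroots
  subst hp
  have hreplicate := add_right_cancel hroots
  have hqq' : q = q' := by simpa using congrArg Multiset.card hreplicate
  subst hqq'
  exact ⟨(Multiset.replicate_right_inj hq).mp hreplicate, rfl, rfl⟩

end Charpoly

section ExteriorPower

open Polynomial

variable {R M N ι : Type*} [CommRing R] [AddCommGroup M] [Module R M] [AddCommGroup N] [Module R N]

lemma extMap_eq_map (d : ℕ) (f : M →ₗ[R] N) : extMap d f = exteriorPower.map d f := by
  ext v
  simp only [LinearMap.compAlternatingMap_apply, exteriorPower.map_apply_ιMulti,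
    exteriorPower.ιMulti_apply_coe]
  exact map_apply_ιMulti f v

variable [LinearOrder ι]

lemma ιMulti_family_smul (d : ℕ) (c : ι → R) (v : ι → M) (t : Set.powersetCard ι d) :
    exteriorPower.ιMulti_family R d (fun i => c i • v i) t =
      (∏ i ∈ t.1, c i) • exteriorPower.ιMulti_family R d v t := by
  have hprod : ∏ i ∈ t.1, c i = ∏ j, c (Set.powersetCard.ofFinEmbEquiv.symm t j) := by
    rw [← Finset.map_orderEmbOfFin_univ t.1 t.2, Finset.prod_map]
    rfl
  rw [hprod]
  exact AlternatingMap.map_smul_univ _ _ _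

lemma map_exteriorPower_basis_eq_smul (d : ℕ) (b : Basis ι R M) {f : End R M} {c : ι → R}
    (hf : ∀ i, f (b i) = c i • b i) (t : Set.powersetCard ι d) :
    exteriorPower.map d f (b.exteriorPower d t) = (∏ i ∈ t.1, c i) • b.exteriorPower d t := by
  rw [exteriorPower.basis_apply, exteriorPower.map_apply_ιMulti_family, ← ιMulti_family_smul]
  exact congrArg (exteriorPower.ιMulti_family R d · t) (funext hf)

lemma charpoly_map_of_apply_basis_eq_smul [Module.Free R M] [Module.Finite R M] [Fintype ι]
    (d : ℕ) (b : Basis ι R M) {f : End R M} {c : ι → R} (hf : ∀ i, f (b i) = c i • b i) :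
    (exteriorPower.map d f).charpoly =
      ∏ t ∈ Finset.univ.powersetCard d, (X - C (∏ i ∈ t, c i)) := by
  rw [charpoly_eq_prod_of_apply_basis_eq_smul (b.exteriorPower d)
    (map_exteriorPower_basis_eq_smul d b hf)]
  exact (Finset.prod_subtype _ (fun t => by simp) fun t => X - C (∏ i ∈ t, c i)).symm

end ExteriorPower

section Reflection

open Polynomial

variable {F V : Type*} [Field F] [AddCommGroup V] [Module F V] [FiniteDimensional F V]

lemma exists_basis_apply_eq_mulSingle_smul {m : ℕ} (hm : finrank F V = m + 1) {f : End F V}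
    (hf : finrank F (LinearMap.range (f - 1)) = 1) {a : V} (ha : IsReflVector f a) {l : F}
    (hl : l ≠ 1) (hfa : f a = l • a) :
    ∃ b : Basis (Fin (m + 1)) F V, ∀ i, f (b i) = (Pi.mulSingle 0 l : Fin (m + 1) → F) i • b i := by
  have hl' : l - 1 ≠ 0 := sub_ne_zero.mpr hl
  have hga : (f - 1) a = (l - 1) • a := by simp [hfa, sub_smul]
  have hker : finrank F (LinearMap.ker (f - 1)) = m := by
    have := LinearMap.finrank_range_add_finrank_ker (f - 1)
    omega
  have hindep : ∀ (c : F), ∀ x ∈ LinearMap.ker (f - 1), c • a + x = 0 → c = 0 := by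
    intro c x hx hcx
    have := congrArg (f - 1 : End F V) hcx
    rw [map_add, map_smul, hga, LinearMap.mem_ker.mp hx, map_zero, add_zero] at this
    simpa [ha.1, hl'] using this
  have hspan : ∀ z : V, ∃ c : F, z + c • a ∈ LinearMap.ker (f - 1) := by
    intro z
    have ha' : (⟨a, ha.2⟩ : LinearMap.range (f - 1)) ≠ 0 := by simpa using ha.1
    obtain ⟨c, hc⟩ := (finrank_eq_one_iff_of_nonzero' _ ha').mp hf ⟨(f - 1) z, z, rfl⟩
    have hc' : c • a = (f - 1) z := congrArg Subtype.val hc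
    refine ⟨-(c / (l - 1)), ?_⟩
    rw [LinearMap.mem_ker, map_add, map_smul, hga, ← hc', smul_smul, neg_mul,
      div_mul_cancel₀ c hl', neg_smul, add_neg_cancel]
  refine ⟨Basis.mkFinCons a (finBasisOfFinrankEq F _ hker) hindep hspan, Fin.cases ?_ fun j => ?_⟩
  · simpa using hfa
  · have hfixed := LinearMap.mem_ker.mp (finBasisOfFinrankEq F _ hker j).2
    rw [LinearMap.sub_apply, Module.End.one_apply, sub_eq_zero] at hfixed
    simpa using hfixed

lemma charpoly_map_succ_of_isReflVector {m : ℕ} (hm : finrank F V = m + 1) {f : End F V}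
    (hf : finrank F (LinearMap.range (f - 1)) = 1) {a : V} (ha : IsReflVector f a) {l : F}
    (hl : l ≠ 1) (hfa : f a = l • a) (d : ℕ) :
    (exteriorPower.map (d + 1) f).charpoly =
      (X - C l) ^ m.choose d * (X - C 1) ^ m.choose (d + 1) := by
  obtain ⟨b, hb⟩ := exists_basis_apply_eq_mulSingle_smul hm hf ha hl hfa
  have hcard : (Finset.univ.erase (0 : Fin (m + 1))).card = m := by simp
  have hprod := prod_powersetCard_succ_insert_ite_mem
    (Finset.notMem_erase (0 : Fin (m + 1)) Finset.univ) d (X - C l) (X - C 1)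
  rw [Finset.insert_erase (Finset.mem_univ _), hcard] at hprod
  rw [charpoly_map_of_apply_basis_eq_smul (d + 1) b hb, ← hprod]
  refine Finset.prod_congr rfl fun t _ => ?_
  rw [Finset.prod_pi_mulSingle', apply_ite C, apply_ite (X - ·)]

end Reflection

section Representation

variable {F V W ι : Type*} [Field F] [AddCommGroup V] [Module F V]

lemma nontrivial_of_irreducible_of_one_lt_finrank [Monoid W] (ρ : Representation F W V)
    (hirr : ∀ U : Submodule F V, (∀ w : W, ∀ v ∈ U, ρ w v ∈ U) → U = ⊥ ∨ U = ⊤)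
    (hV : 1 < finrank F V) : Nontrivial W := by
  by_contra hW
  rw [not_nontrivial_iff_subsingleton] at hW
  have : Nontrivial V := nontrivial_of_finrank_pos (R := F) (by omega)
  obtain ⟨v, hv⟩ := exists_ne (0 : V)
  have hinv : ∀ w : W, ∀ x ∈ F ∙ v, ρ w x ∈ F ∙ v := fun w x hx => by
    rwa [Subsingleton.elim w 1, map_one, Module.End.one_apply]
  rcases hirr _ hinv with h | h
  · exact hv (Submodule.span_singleton_eq_bot.mp h)
  · exact hV.not_ge (finrank_le_one v fun w => Submodule.mem_span_singleton.mp (h ▸ trivial))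

lemma nonempty_of_closure_range_eq_top [Group W] [Nontrivial W] {s : ι → W}
    (hs : Subgroup.closure (Set.range s) = ⊤) : Nonempty ι := by
  by_contra hι
  rw [not_nonempty_iff] at hι
  rw [Set.range_eq_empty, Subgroup.closure_empty] at hs
  exact bot_ne_top hs

end Representation

theorem stmt_17_general {F V₁ V₂ : Type*} [Field F]
    [AddCommGroup V₁] [Module F V₁] [FiniteDimensional F V₁]
    [AddCommGroup V₂] [Module F V₂] [FiniteDimensional F V₂]
    {f₁ : End F V₁} {f₂ : End F V₂}
    (hf₁ : finrank F (LinearMap.range (f₁ - 1)) = 1)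
    (hf₂ : finrank F (LinearMap.range (f₂ - 1)) = 1)
    {α : V₁} {β : V₂} (hα : IsReflVector f₁ α) (hβ : IsReflVector f₂ β)
    {lam mu : F} (hlam : lam ≠ 1 ∧ f₁ α = lam • α) (hmu : mu ≠ 1 ∧ f₂ β = mu • β)
    {d₁ d₂ : ℕ} (hd₁ : 1 ≤ d₁) (hd₁' : d₁ < finrank F V₁) (hd₂ : 1 ≤ d₂) (hd₂' : d₂ < finrank F V₂)
    (e : ⋀[F]^d₁ V₁ ≃ₗ[F] ⋀[F]^d₂ V₂) (he : ∀ x, e (extMap d₁ f₁ x) = extMap d₂ f₂ (e x)) :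
    d₁ = d₂ ∧ finrank F V₁ = finrank F V₂ ∧ lam = mu := by
  obtain ⟨a₁, rfl⟩ := Nat.exists_eq_add_of_le' hd₁
  obtain ⟨a₂, rfl⟩ := Nat.exists_eq_add_of_le' hd₂
  obtain ⟨m₁, hm₁⟩ := Nat.exists_eq_add_of_le' (Nat.one_le_of_lt hd₁')
  obtain ⟨m₂, hm₂⟩ := Nat.exists_eq_add_of_le' (Nat.one_le_of_lt hd₂')
  simp only [extMap_eq_map] at he
  have hconj : e.conj (exteriorPower.map (a₁ + 1) f₁) = exteriorPower.map (a₂ + 1) f₂ := by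
    refine LinearMap.ext fun x => ?_
    rw [LinearEquiv.conj_apply_apply, he, LinearEquiv.apply_symm_apply]
  have hcharpoly := e.charpoly_conj (exteriorPower.map (a₁ + 1) f₁)
  rw [hconj, charpoly_map_succ_of_isReflVector hm₁ hf₁ hα hlam.1 hlam.2,
    charpoly_map_succ_of_isReflVector hm₂ hf₂ hβ hmu.1 hmu.2] at hcharpoly
  obtain ⟨heig, hchoose, hchoose_succ⟩ := eq_and_eq_and_eq_of_X_sub_C_pow_mul_eq hlam.1 hmu.1
    (Nat.choose_ne_zero (by omega)) hcharpoly.symm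
  obtain ⟨rfl, rfl⟩ :=
    eq_and_eq_of_choose_eq_of_choose_succ_eq (by omega) (by omega) hchoose hchoose_succ
  exact ⟨rfl, hm₁.trans hm₂.symm, heig⟩

/-- If `⋀^{d₁} V₁ ≅ ⋀^{d₂} V₂` as `W`-modules with `1 ≤ dᵢ ≤ nᵢ - 1`, then `d₁ = d₂`,
`n₁ = n₂`, and the reflection eigenvalues of the generators agree. -/
theorem stmt_17 {F V₁ V₂ W : Type*} [Field F] [CharZero F]
    [AddCommGroup V₁] [Module F V₁] [FiniteDimensional F V₁] [Nontrivial V₁]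
    [AddCommGroup V₂] [Module F V₂] [FiniteDimensional F V₂] [Nontrivial V₂] [Group W]
    (k : ℕ) (s : Fin k → W) (hgen : Subgroup.closure (Set.range s) = ⊤)
    (ρ₁ : Representation F W V₁) (ρ₂ : Representation F W V₂)
    (hirr₁ : ∀ U : Submodule F V₁, (∀ w : W, ∀ v ∈ U, ρ₁ w v ∈ U) → U = ⊥ ∨ U = ⊤)
    (hirr₂ : ∀ U : Submodule F V₂, (∀ w : W, ∀ v ∈ U, ρ₂ w v ∈ U) → U = ⊥ ∨ U = ⊤)
    (α : Fin k → V₁) (β : Fin k → V₂)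
    (hrefl₁ : ∀ i, IsGenReflection (ρ₁ (s i)) ∧ IsReflVector (ρ₁ (s i)) (α i))
    (hrefl₂ : ∀ i, IsGenReflection (ρ₂ (s i)) ∧ IsReflVector (ρ₂ (s i)) (β i))
    (lam mu : Fin k → F)
    (hlam : ∀ i, lam i ≠ 1 ∧ ρ₁ (s i) (α i) = lam i • α i)
    (hmu : ∀ i, mu i ≠ 1 ∧ ρ₂ (s i) (β i) = mu i • β i)
    (n₁ n₂ : ℕ) (hn₁ : Module.finrank F V₁ = n₁) (hn₂ : Module.finrank F V₂ = n₂)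
    (d₁ d₂ : ℕ) (hd₁ : 1 ≤ d₁) (hd₁' : d₁ ≤ n₁ - 1) (hd₂ : 1 ≤ d₂) (hd₂' : d₂ ≤ n₂ - 1)
    (e : ↥(⋀[F]^d₁ V₁) ≃ₗ[F] ↥(⋀[F]^d₂ V₂))
    (he : ∀ (w : W) (x : ↥(⋀[F]^d₁ V₁)), e (extMap d₁ (ρ₁ w) x) = extMap d₂ (ρ₂ w) (e x)) :
    d₁ = d₂ ∧ n₁ = n₂ ∧ ∀ i, lam i = mu i := by
  have : Nontrivial W := nontrivial_of_irreducible_of_one_lt_finrank ρ₁ hirr₁ (by omega)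
  obtain ⟨i₀⟩ := nonempty_of_closure_range_eq_top hgen
  have h i := stmt_17_general (hrefl₁ i).1.2 (hrefl₂ i).1.2 (hrefl₁ i).2 (hrefl₂ i).2
    (hlam i) (hmu i) hd₁ (by omega) hd₂ (by omega) e (he (s i))
  exact ⟨(h i₀).1, hn₁ ▸ hn₂ ▸ (h i₀).2.1, fun i => (h i).2.2⟩
end

section
/- Let W be a group with finite generating set S = {s_1, ..., s_k}, and let (V_1, ρ_1), (V_2, ρ_2) be irreducible reflection representations of (W, S) over a field of characteristic 0. Suppose Λ^{d_1} V_1 ≅ Λ^{d_2} V_2 as W-modules for some integers 1 ≤ d_ι ≤ dim V_ι - 1 (ι = 1, 2). Then V_1 ≅ V_2 as W-modules. -/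
open ExteriorAlgebra Module

/-!
Let `R` be the space of pairs `(X, Y)` of endomorphisms of `V₁` and `V₂` whose extensions to
derivations of the exterior powers are intertwined by `e`. It is a Lie algebra and, since a
derivation of the exterior algebra is determined by its restriction to `⋀^d` for `1 ≤ d < dim V`, it
is the graph of a partial injection. A reflection `1 + c • P`, with `P` a rank-one projection, acts
on exterior powers as `1 + c • D` where `D` is the derivation extending `P`, and `D` is again
idempotent. Comparing the two actions of `s i`, the reflections `ρ₁ (s i)` and `ρ₂ (s i)` have the
same `c i`, and the pair `p i` of their projections lies in `R`.

View pairs of endomorphisms as an algebra over `K = F × F`, in which every `p i` is a rank-one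
idempotent. As `R` is a graph, `c • x ∈ R` for `x ∈ R` nonzero and `c ∈ K` forces `c ∈ F`. With this
rigidity, commutators and Peirce components show that every product `z` of the `p i` has all corners
`p j * z * p j`, and hence all `z * p j`, in `R`. Applying these products to the pair of reflection
vectors of some `s j` therefore gives a nonzero `W`-invariant subspace of `V₁ × V₂` meeting `V₁ × 0`
and `0 × V₂` trivially; by irreducibility it is the graph of an isomorphism.
-/

section RigidLieSubspace

variable {F K B : Type*} [CommRing F] [CommRing K] [Algebra F K] [Ring B] [Algebra F B]
  [Algebra K B]

/-- A rank-one idempotent over `K`: an idempotent `p` whose corner ring `p B p` is free over `K`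
with basis `p`. -/
structure IsRankOneIdem (K : Type*) {B : Type*} [CommRing K] [Ring B] [Algebra K B] (p : B) :
    Prop where
  isIdempotentElem : IsIdempotentElem p
  eq_zero_of_smul_eq_zero : ∀ c : K, c • p = 0 → c = 0
  exists_corner_eq_smul : ∀ x, ∃ c : K, p * x * p = c • p

namespace IsRankOneIdem

variable {p q : B}

lemma ne_zero [Nontrivial K] (hp : IsRankOneIdem K p) : p ≠ 0 := fun h =>
  one_ne_zero (hp.eq_zero_of_smul_eq_zero 1 (by rw [h, smul_zero]))

lemma smul_left_injective (hp : IsRankOneIdem K p) : Function.Injective fun c : K => c • p :=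
  (injective_iff_map_eq_zero (LinearMap.toSpanSingleton K B p)).2 hp.eq_zero_of_smul_eq_zero

lemma smul_eq_smul_of_mul_eq (hp : IsRankOneIdem K p) (hq : IsRankOneIdem K q) {t : K}
    (hpq : p * q = t • p) (hqp : q * p = t • p) : t • p = t • q := by
  have hq2 : q * q = q := hq.isIdempotentElem
  obtain ⟨u, hu⟩ := hq.exists_corner_eq_smul p
  have htu : t • p = u • q := by rw [← hu, hqp, ← hpq, mul_assoc, hq2]
  have htt : t * t = t := hp.smul_left_injective <| by
    dsimp only
    rw [mul_smul, ← hpq, ← smul_mul_assoc, ← hpq, mul_assoc, hq2]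
  have hut : u * t = t := hp.smul_left_injective <| by
    dsimp only
    rw [mul_smul, ← hpq, ← mul_smul_comm, ← htu, mul_smul_comm, hp.isIdempotentElem.eq, hpq]
  have htu' : t * u = u := hq.smul_left_injective <| by
    dsimp only
    rw [mul_smul, ← htu, smul_smul, htt]
  rw [htu, ← hut, mul_comm, htu']

end IsRankOneIdem

lemma mem_of_add_self_mem [Invertible (2 : F)] {R : Submodule F B} {x : B} (h : x + x ∈ R) :
    x ∈ R := by
  have := R.smul_mem (⅟2 : F) h
  rwa [← two_smul F x, smul_smul, invOf_mul_self, one_smul] at this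

/-- An `F`-subspace `R` of a `K`-algebra that is closed under commutators and meets the `K`-line
`K • x` of each of its nonzero elements `x` in `F • x` only. -/
structure IsRigidLieSubspace (K : Type*) {F B : Type*} [CommRing F] [CommRing K] [Algebra F K]
    [Ring B] [Algebra F B] [Algebra K B] (R : Submodule F B) : Prop where
  lie_mem : ∀ x ∈ R, ∀ y ∈ R, ⁅x, y⁆ ∈ R
  rigid : ∀ x ∈ R, ∀ c : K, c • x ∈ R → x = 0 ∨ c ∈ Set.range (algebraMap F K)

/-- The elements of `R` whose corners `p i * z * p i` all lie in `R`. It is a left module over the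
algebra generated by the `p i`, see `IsRigidLieSubspace.mul_mem_cornerSubmodule`. -/
def cornerSubmodule {ι : Type*} (R : Submodule F B) (p : ι → B) : Submodule F B :=
  R ⊓ ⨅ i, R.comap (LinearMap.mulLeftRight F (p i, p i))

lemma mem_cornerSubmodule {ι : Type*} {R : Submodule F B} {p : ι → B} {z : B} :
    z ∈ cornerSubmodule R p ↔ z ∈ R ∧ ∀ i, p i * z * p i ∈ R := by
  simp [cornerSubmodule, Submodule.mem_iInf]

namespace IsRigidLieSubspace

variable {R : Submodule F B} {p q u x y z : B} {ι : Type*} {e : ι → B}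

lemma smul_mem [IsScalarTower F K B] (hR : IsRigidLieSubspace K R) {c : K} (hx : x ∈ R)
    (hx0 : x ≠ 0) (hcx : c • x ∈ R) (hy : y ∈ R) : c • y ∈ R := by
  obtain ⟨r, rfl⟩ := (hR.rigid x hx c hcx).resolve_left hx0
  rw [algebraMap_smul]
  exact R.smul_mem r hy

variable [Invertible (2 : F)]

lemma left_mul_sub_corner_mem (hR : IsRigidLieSubspace K R) (hp : IsIdempotentElem p) (hpR : p ∈ R)
    (hz : z ∈ R) : p * z - p * z * p ∈ R := by
  have hpz := hR.lie_mem p hpR z hz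
  apply mem_of_add_self_mem
  convert R.add_mem hpz (hR.lie_mem p hpR _ hpz) using 1
  simp only [Ring.lie_def, mul_sub, sub_mul, ← mul_assoc, hp.eq]
  rw [mul_assoc z p p, hp.eq]
  abel

lemma right_mul_sub_corner_mem (hR : IsRigidLieSubspace K R) (hp : IsIdempotentElem p) (hpR : p ∈ R)
    (hz : z ∈ R) : z * p - p * z * p ∈ R := by
  convert R.sub_mem (hR.left_mul_sub_corner_mem hp hpR hz) (hR.lie_mem p hpR z hz) using 1
  rw [Ring.lie_def]
  abel

lemma smul_right_mul_sub_corner_mem (hR : IsRigidLieSubspace K R) (hp : IsIdempotentElem p)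
    (hq : IsIdempotentElem q) (hpR : p ∈ R) (hqR : q ∈ R) {t : K} (ht : p * q * p = t • p) :
    (1 - 2 * t) • (q * p - p * q * p) ∈ R := by
  convert hR.right_mul_sub_corner_mem hp hpR
    (hR.lie_mem q hqR _ (hR.right_mul_sub_corner_mem hp hpR hqR)) using 1
  have ht' : p * (q * p) = t • p := by rw [← mul_assoc, ht]
  have ht'' : p * (q * (p * q)) = t • (p * q) := by
    rw [← smul_mul_assoc, ← ht', mul_assoc, mul_assoc]
  simp only [Ring.lie_def, mul_sub, sub_mul, mul_smul_comm, smul_mul_assoc, mul_assoc, ht', ht'',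
    hp.eq, hp.mul_self_mul, hq.mul_self_mul]
  module

lemma smul_left_mul_sub_corner_mem (hR : IsRigidLieSubspace K R) (hp : IsIdempotentElem p)
    (hq : IsIdempotentElem q) (hpR : p ∈ R) (hqR : q ∈ R) {t : K} (ht : p * q * p = t • p) :
    (1 - 2 * t) • (p * q - p * q * p) ∈ R := by
  convert R.neg_mem (hR.left_mul_sub_corner_mem hp hpR
    (hR.lie_mem q hqR _ (hR.left_mul_sub_corner_mem hp hpR hqR))) using 1
  have ht' : p * (q * p) = t • p := by rw [← mul_assoc, ht]
  have ht'' : p * (q * (p * q)) = t • (p * q) := by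
    rw [← smul_mul_assoc, ← ht', mul_assoc, mul_assoc]
  simp only [Ring.lie_def, mul_sub, sub_mul, mul_smul_comm, smul_mul_assoc, mul_assoc, ht', ht'',
    hp.eq, hq.eq, hp.mul_self_mul]
  module

lemma mul_mem_of_mem_cornerSubmodule (hR : IsRigidLieSubspace K R)
    (he : ∀ i, IsRankOneIdem K (e i)) (heR : ∀ i, e i ∈ R) (hz : z ∈ cornerSubmodule R e) (j : ι) :
    z * e j ∈ R := by
  obtain ⟨hzR, hzc⟩ := mem_cornerSubmodule.1 hz
  rw [← sub_add_cancel (z * e j) (e j * z * e j)]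
  exact R.add_mem (hR.right_mul_sub_corner_mem (he j).isIdempotentElem (heR j) hzR) (hzc j)

variable [IsScalarTower F K B]

lemma mul_mem_of_mul_eq_smul (hR : IsRigidLieSubspace K R) (hp : p ∈ R) (hu : u ∈ R) (hy : y ∈ R)
    (hpu : p * u = u) (hup : u * p = 0) {t : K} (huy : u * y = t • p) : u * y ∈ R := by
  rcases eq_or_ne u 0 with rfl | hu0
  · rw [zero_mul]
    exact R.zero_mem
  have huu : u * u = 0 := by rw [← hpu, ← mul_assoc, mul_assoc p, hup, mul_zero, zero_mul]
  -- Since `u * u = 0`, the double commutator `⁅⁅u, y⁆, u⁆` is `2 • (u * y * u) = 2 • t • u`.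
  have htu : t • u ∈ R := by
    apply mem_of_add_self_mem
    convert hR.lie_mem _ (hR.lie_mem u hu y hy) u hu using 1
    simp only [Ring.lie_def, sub_mul, mul_sub, ← mul_assoc, huy, smul_mul_assoc, hpu, mul_smul_comm,
      hup, smul_zero, zero_sub, sub_neg_eq_add]
    rw [mul_assoc y, huu, mul_zero, sub_zero]
  rw [huy]
  exact hR.smul_mem hu hu0 htu hp

lemma smul_mem_of_one_sub_two_smul_mem (hR : IsRigidLieSubspace K R) {t : K} (hx : x ∈ R)
    (hx0 : x ≠ 0) (htx : (1 - 2 * t) • x ∈ R) (hy : y ∈ R) : t • y ∈ R := by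
  refine hR.smul_mem hx hx0 (mem_of_add_self_mem ?_) hy
  convert R.sub_mem hx htx using 1
  module

lemma corner_mem (hR : IsRigidLieSubspace K R) (hp : IsRankOneIdem K p) (hq : IsRankOneIdem K q)
    (hpR : p ∈ R) (hqR : q ∈ R) : p * q * p ∈ R := by
  obtain ⟨t, ht⟩ := hp.exists_corner_eq_smul q
  have hpi := hp.isIdempotentElem
  have hqi := hq.isIdempotentElem
  rw [ht]
  by_cases hqp : q * p - p * q * p = 0
  · by_cases hpq : p * q - p * q * p = 0
    · -- Now `q` commutes with `p`, and `t • p = t • q`: either `p = q`, or `t` is a scalar of `F`.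
      rw [ht, sub_eq_zero] at hpq hqp
      have htpq : t • (p - q) ∈ R := by
        rw [smul_sub, hp.smul_eq_smul_of_mul_eq hq hpq hqp, sub_self]
        exact R.zero_mem
      rcases hR.rigid _ (R.sub_mem hpR hqR) t htpq with hpq0 | ⟨r, rfl⟩
      · rw [← hpq, ← sub_eq_zero.1 hpq0, hpi.eq]
        exact hpR
      · rw [algebraMap_smul]
        exact R.smul_mem r hpR
    · exact hR.smul_mem_of_one_sub_two_smul_mem (hR.left_mul_sub_corner_mem hpi hpR hqR) hpq
        (hR.smul_left_mul_sub_corner_mem hpi hqi hpR hqR ht) hpR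
  · exact hR.smul_mem_of_one_sub_two_smul_mem (hR.right_mul_sub_corner_mem hpi hpR hqR) hqp
      (hR.smul_right_mul_sub_corner_mem hpi hqi hpR hqR ht) hpR

lemma corner_mul_mem [Nontrivial K] (hR : IsRigidLieSubspace K R) (hp : IsRankOneIdem K p)
    (hpR : p ∈ R) (hqR : q ∈ R) (hzR : z ∈ R) (hpqp : p * q * p ∈ R) (hpzp : p * z * p ∈ R) :
    p * (q * z) * p ∈ R := by
  have hpi := hp.isIdempotentElem
  have peirce : p * (q * z) * p =
      (p * q - p * q * p) * (z * p - p * z * p) + p * q * p * (p * z * p) := by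
    simp only [mul_sub, sub_mul, mul_assoc, hpi.mul_self_mul]
    abel
  rw [peirce]
  refine R.add_mem ?_ ?_
  · obtain ⟨t, ht⟩ := hp.exists_corner_eq_smul (q * z - q * p * z)
    refine hR.mul_mem_of_mul_eq_smul hpR (hR.left_mul_sub_corner_mem hpi hpR hqR)
      (hR.right_mul_sub_corner_mem hpi hpR hzR) ?_ ?_ (t := t) ?_
    · simp only [mul_sub, ← mul_assoc, hpi.eq]
    · simp only [sub_mul, mul_assoc, hpi.eq, sub_self]
    · rw [← ht]
      simp only [mul_sub, sub_mul, mul_assoc, hpi.mul_self_mul]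
      abel
  · obtain ⟨t, ht⟩ := hp.exists_corner_eq_smul q
    rw [ht] at hpqp ⊢
    rw [smul_mul_assoc, ← mul_assoc, ← mul_assoc, hpi.eq]
    exact hR.smul_mem hpR hp.ne_zero hpqp hpzp

lemma self_mem_cornerSubmodule (hR : IsRigidLieSubspace K R) (he : ∀ i, IsRankOneIdem K (e i))
    (heR : ∀ i, e i ∈ R) (j : ι) : e j ∈ cornerSubmodule R e :=
  mem_cornerSubmodule.2 ⟨heR j, fun i => hR.corner_mem (he i) (he j) (heR i) (heR j)⟩

lemma mul_mem_cornerSubmodule [Nontrivial K] (hR : IsRigidLieSubspace K R)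
    (he : ∀ i, IsRankOneIdem K (e i)) (heR : ∀ i, e i ∈ R) (hz : z ∈ cornerSubmodule R e) (j : ι) :
    e j * z ∈ cornerSubmodule R e := by
  obtain ⟨hzR, hzc⟩ := mem_cornerSubmodule.1 hz
  refine mem_cornerSubmodule.2 ⟨?_, fun i => hR.corner_mul_mem (he i) (heR i) (heR j) hzR
    (hR.corner_mem (he i) (he j) (heR i) (heR j)) (hzc i)⟩
  rw [← sub_add_cancel (e j * z) (e j * z * e j)]
  exact R.add_mem (hR.left_mul_sub_corner_mem (he j).isIdempotentElem (heR j) hzR) (hzc j)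

end IsRigidLieSubspace

end RigidLieSubspace

section Product

section Algebra

variable {F A₁ A₂ : Type*} [CommRing F] [Ring A₁] [Algebra F A₁] [Ring A₂] [Algebra F A₂]

/-- The componentwise algebra structure of `A₁ × A₂` over `F × F`. -/
abbrev prodAlgebra : Algebra (F × F) (A₁ × A₂) :=
  ((algebraMap F A₁).prodMap (algebraMap F A₂)).toAlgebra'
    fun c x => Prod.ext (Algebra.commutes c.1 x.1) (Algebra.commutes c.2 x.2)

attribute [local instance] prodAlgebra

lemma prod_smul_def (c : F × F) (x : A₁ × A₂) : c • x = (c.1 • x.1, c.2 • x.2) := by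
  simp only [Algebra.smul_def]
  rfl

instance isScalarTower_prodAlgebra : IsScalarTower F (F × F) (A₁ × A₂) :=
  ⟨fun r c x => by simp only [prod_smul_def, Prod.smul_fst, Prod.smul_snd, smul_assoc]; rfl⟩

lemma IsRankOneIdem.prodMk {p₁ : A₁} {p₂ : A₂} (h₁ : IsRankOneIdem F p₁)
    (h₂ : IsRankOneIdem F p₂) : IsRankOneIdem (F × F) (p₁, p₂) where
  isIdempotentElem := Prod.ext h₁.isIdempotentElem h₂.isIdempotentElem
  eq_zero_of_smul_eq_zero c hc := by
    rw [prod_smul_def] at hc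
    exact Prod.ext (h₁.eq_zero_of_smul_eq_zero _ (congrArg Prod.fst hc))
      (h₂.eq_zero_of_smul_eq_zero _ (congrArg Prod.snd hc))
  exists_corner_eq_smul x := by
    obtain ⟨c₁, hc₁⟩ := h₁.exists_corner_eq_smul x.1
    obtain ⟨c₂, hc₂⟩ := h₂.exists_corner_eq_smul x.2
    exact ⟨(c₁, c₂), by rw [prod_smul_def]; exact Prod.ext hc₁ hc₂⟩

end Algebra

section Field

variable {F A₁ A₂ : Type*} [Field F] [Ring A₁] [Algebra F A₁] [Ring A₂] [Algebra F A₂]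

attribute [local instance] prodAlgebra

/-- If `x` and `(c₁, c₂) • x` lie in `R`, so does their combination `(0, (c₂ - c₁) • x.2)`. -/
lemma isRigidLieSubspace_of_disjoint_ker {R : Submodule F (A₁ × A₂)}
    (hlie : ∀ x ∈ R, ∀ y ∈ R, ⁅x, y⁆ ∈ R) (h₁ : Disjoint R (LinearMap.ker (LinearMap.fst F A₁ A₂)))
    (h₂ : Disjoint R (LinearMap.ker (LinearMap.snd F A₁ A₂))) :
    IsRigidLieSubspace (F × F) R where
  lie_mem := hlie
  rigid x hx c hcx := by
    have hdiff : ((0, (c.2 - c.1) • x.2) : A₁ × A₂) ∈ R := by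
      convert R.sub_mem hcx (R.smul_mem c.1 hx) using 1
      rw [prod_smul_def]
      ext <;> simp [sub_smul]
    have hzero := congrArg Prod.snd (LinearMap.disjoint_ker.1 h₁ _ hdiff rfl)
    rcases smul_eq_zero.1 hzero with hc | hx2
    · exact .inr ⟨c.1, Prod.ext rfl (sub_eq_zero.1 hc).symm⟩
    · exact .inl (LinearMap.disjoint_ker.1 h₂ x hx hx2)

end Field

section End

variable {F V V₁ V₂ : Type*} [Field F] [AddCommGroup V] [Module F V] [AddCommGroup V₁]
  [Module F V₁] [AddCommGroup V₂] [Module F V₂]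

lemma isRankOneIdem_smulRight {f : Dual F V} {α : V} (h : f α = 1) :
    IsRankOneIdem F (f.smulRight α) where
  isIdempotentElem := LinearMap.ext fun v => by simp [h]
  eq_zero_of_smul_eq_zero c hc := by simpa [h] using congrArg f (LinearMap.congr_fun hc α)
  exists_corner_eq_smul X := ⟨f (X α), LinearMap.ext fun v => by simp [smul_smul, mul_comm]⟩

attribute [local instance] prodAlgebra

lemma exists_invariant_graph [NeZero (2 : F)] {ι : Type*} [Nonempty ι]
    {R : Submodule F (End F V₁ × End F V₂)} (hlie : ∀ x ∈ R, ∀ y ∈ R, ⁅x, y⁆ ∈ R)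
    (hfst : Disjoint R (LinearMap.ker (LinearMap.fst F (End F V₁) (End F V₂))))
    (hsnd : Disjoint R (LinearMap.ker (LinearMap.snd F (End F V₁) (End F V₂))))
    {f₁ : ι → Dual F V₁} {α₁ : ι → V₁} {f₂ : ι → Dual F V₂} {α₂ : ι → V₂}
    (h₁ : ∀ i, f₁ i (α₁ i) = 1) (h₂ : ∀ i, f₂ i (α₂ i) = 1)
    (hmem : ∀ i, ((f₁ i).smulRight (α₁ i), (f₂ i).smulRight (α₂ i)) ∈ R) :
    ∃ M : Submodule F (V₁ × V₂), M ≠ ⊥ ∧ Disjoint M (LinearMap.ker (LinearMap.fst F V₁ V₂)) ∧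
      Disjoint M (LinearMap.ker (LinearMap.snd F V₁ V₂)) ∧
      ∀ i, ∀ v ∈ M, (f₁ i v.1 • α₁ i, f₂ i v.2 • α₂ i) ∈ M := by
  have := invertibleOfNonzero (two_ne_zero (α := F))
  have hR := isRigidLieSubspace_of_disjoint_ker hlie hfst hsnd
  have hp i := (isRankOneIdem_smulRight (h₁ i)).prodMk (isRankOneIdem_smulRight (h₂ i))
  obtain ⟨i₀⟩ := ‹Nonempty ι›
  refine ⟨(cornerSubmodule R fun i => ((f₁ i).smulRight (α₁ i), (f₂ i).smulRight (α₂ i))).map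
    ((LinearMap.applyₗ (α₁ i₀)).prodMap (LinearMap.applyₗ (α₂ i₀))), ?_, ?_, ?_, ?_⟩
  · rw [Submodule.ne_bot_iff]
    refine ⟨_, ⟨_, hR.self_mem_cornerSubmodule hp hmem i₀, rfl⟩, fun h => ?_⟩
    simpa [h₁] using congrArg (f₁ i₀) (congrArg Prod.fst h)
  · rw [LinearMap.disjoint_ker]
    rintro _ ⟨Z, hZ, rfl⟩ (hZα : Z.1 (α₁ i₀) = 0)
    have hzero := LinearMap.disjoint_ker.1 hfst _ (hR.mul_mem_of_mem_cornerSubmodule hp hmem hZ i₀)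
      (LinearMap.ext fun v => by simp [hZα])
    have h := LinearMap.congr_fun (congrArg Prod.snd hzero) (α₂ i₀)
    exact Prod.ext hZα (by simpa [h₂] using h)
  · rw [LinearMap.disjoint_ker]
    rintro _ ⟨Z, hZ, rfl⟩ (hZα : Z.2 (α₂ i₀) = 0)
    have hzero := LinearMap.disjoint_ker.1 hsnd _ (hR.mul_mem_of_mem_cornerSubmodule hp hmem hZ i₀)
      (LinearMap.ext fun v => by simp [hZα])
    have h := LinearMap.congr_fun (congrArg Prod.fst hzero) (α₁ i₀)
    exact Prod.ext (by simpa [h₁] using h) hZα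
  · rintro i _ ⟨Z, hZ, rfl⟩
    exact ⟨_, hR.mul_mem_cornerSubmodule hp hmem hZ i, rfl⟩

end End

end Product

section ExteriorDerivation

variable {R M : Type*} [CommRing R] [AddCommGroup M] [Module R M]

lemma linearMap_ext_of_ι_mul {N : Type*} [AddCommGroup N] [Module R N]
    {g h : ExteriorAlgebra R M →ₗ[R] N} (hone : g 1 = h 1)
    (hmul : ∀ v x, g x = h x → g (ι R v * x) = h (ι R v * x)) : g = h := by
  refine LinearMap.ext fun z => ?_
  induction z using CliffordAlgebra.left_induction with
  | algebraMap r =>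
    rw [Algebra.algebraMap_eq_smul_one]
    exact (map_smul g r 1).trans ((congrArg _ hone).trans (map_smul h r 1).symm)
  | add x y hx hy => rw [map_add, map_add, hx, hy]
  | ι_mul x v hx => exact hmul v x hx

/-- The algebra map `v ↦ v + ε X v` to the dual numbers over the exterior algebra. -/
noncomputable def extDualNumberHom (X : End R M) :
    ExteriorAlgebra R M →ₐ[R] DualNumber (ExteriorAlgebra R M) :=
  ExteriorAlgebra.lift R ⟨
    { toFun := fun v => TrivSqZeroExt.inl (ι R v) + TrivSqZeroExt.inr (ι R (X v))
      map_add' := fun v w => by ext <;> simp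
      map_smul' := fun c v => by ext <;> simp }, fun v => by ext <;> simp⟩

lemma extDualNumberHom_ι (X : End R M) (v : M) :
    extDualNumberHom X (ι R v) = TrivSqZeroExt.inl (ι R v) + TrivSqZeroExt.inr (ι R (X v)) :=
  ExteriorAlgebra.lift_ι_apply R _ _ v

lemma fst_extDualNumberHom (X : End R M) (z : ExteriorAlgebra R M) :
    (extDualNumberHom X z).fst = z := by
  suffices h : (TrivSqZeroExt.fstHom R _ _).comp (extDualNumberHom X) = AlgHom.id R _ from
    DFunLike.congr_fun h z
  ext v
  simp [extDualNumberHom_ι]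

/-- The derivation of the exterior algebra extending an endomorphism `X`: the `ε`-part of
`extDualNumberHom X`. -/
noncomputable def extDerivation (X : End R M) : End R (ExteriorAlgebra R M) :=
  (TrivSqZeroExt.sndHom (ExteriorAlgebra R M) (ExteriorAlgebra R M)).restrictScalars R ∘ₗ
    (extDualNumberHom X).toLinearMap

lemma extDerivation_one (X : End R M) : extDerivation X 1 = 0 := by
  simp [extDerivation]

lemma extDerivation_ι_mul (X : End R M) (v : M) (x : ExteriorAlgebra R M) :
    extDerivation X (ι R v * x) = ι R v * extDerivation X x + ι R (X v) * x := by
  simp [extDerivation, extDualNumberHom_ι, fst_extDualNumberHom]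

lemma eq_extDerivation {X : End R M} {D : End R (ExteriorAlgebra R M)} (hone : D 1 = 0)
    (hmul : ∀ v x, D (ι R v * x) = ι R v * D x + ι R (X v) * x) : D = extDerivation X :=
  linearMap_ext_of_ι_mul (hone.trans (extDerivation_one X).symm) fun v x hx => by
    rw [hmul, hx, extDerivation_ι_mul]

lemma extDerivation_add (X Y : End R M) :
    extDerivation (X + Y) = extDerivation X + extDerivation Y :=
  (eq_extDerivation (by simp [extDerivation_one]) fun v x => by
    simp only [LinearMap.add_apply, extDerivation_ι_mul, map_add, mul_add, add_mul]
    abel).symm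

lemma extDerivation_smul (c : R) (X : End R M) : extDerivation (c • X) = c • extDerivation X :=
  (eq_extDerivation (by simp [extDerivation_one]) fun v x => by
    simp only [LinearMap.smul_apply, extDerivation_ι_mul, map_smul, smul_add, mul_smul_comm,
      smul_mul_assoc]).symm

lemma extDerivation_lie (X Y : End R M) :
    extDerivation ⁅X, Y⁆ = ⁅extDerivation X, extDerivation Y⁆ :=
  (eq_extDerivation (by simp [Ring.lie_def, extDerivation_one]) fun v x => by
    simp only [Ring.lie_def, LinearMap.sub_apply, Module.End.mul_apply, extDerivation_ι_mul,
      map_add, map_sub, mul_sub, sub_mul]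
    abel).symm

/-- The interior product with a linear form `f`, that is, `CliffordAlgebra.contractLeft f` for the
zero quadratic form, as an endomorphism of the exterior algebra. -/
noncomputable def interiorProduct (f : Dual R M) : End R (ExteriorAlgebra R M) :=
  CliffordAlgebra.contractLeft (Q := 0) f

lemma interiorProduct_one (f : Dual R M) : interiorProduct f 1 = 0 :=
  CliffordAlgebra.contractLeft_one 0 f

lemma interiorProduct_ι_mul (f : Dual R M) (v : M) (x : ExteriorAlgebra R M) :
    interiorProduct f (ι R v * x) = f v • x - ι R v * interiorProduct f x :=
  CliffordAlgebra.contractLeft_ι_mul f v x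

lemma interiorProduct_interiorProduct (f : Dual R M) (x : ExteriorAlgebra R M) :
    interiorProduct f (interiorProduct f x) = 0 :=
  CliffordAlgebra.contractLeft_contractLeft f x

lemma ι_mul_ι_mul_swap (v w : M) (x : ExteriorAlgebra R M) :
    ι R v * (ι R w * x) = -(ι R w * (ι R v * x)) := by
  rw [← mul_assoc, eq_neg_of_add_eq_zero_left (ι_add_mul_swap v w), neg_mul, mul_assoc]

lemma extDerivation_smulRight (f : Dual R M) (α : M) :
    extDerivation (f.smulRight α) = LinearMap.mulLeft R (ι R α) ∘ₗ interiorProduct f := by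
  refine (eq_extDerivation (by simp [interiorProduct_one]) fun v x => ?_).symm
  simp only [LinearMap.comp_apply, LinearMap.mulLeft_apply, LinearMap.smulRight_apply, map_smul,
    interiorProduct_ι_mul, mul_sub, mul_smul_comm, smul_mul_assoc, ι_mul_ι_mul_swap α v]
  abel

lemma isIdempotentElem_extDerivation_smulRight {f : Dual R M} {α : M} (h : f α = 1) :
    IsIdempotentElem (extDerivation (f.smulRight α)) := LinearMap.ext fun z => by
  simp [extDerivation_smulRight, interiorProduct_ι_mul, interiorProduct_interiorProduct, h]

lemma map_one_add_smulRight (f : Dual R M) (α : M) :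
    (ExteriorAlgebra.map (1 + f.smulRight α)).toLinearMap =
      1 + extDerivation (f.smulRight α) := by
  refine linearMap_ext_of_ι_mul (by simp [extDerivation_one]) fun v x hx => ?_
  have hα : ι R α * extDerivation (f.smulRight α) x = 0 := by
    rw [extDerivation_smulRight, LinearMap.comp_apply, LinearMap.mulLeft_apply, ← mul_assoc,
      ι_sq_zero, zero_mul]
  rw [AlgHom.toLinearMap_apply] at hx ⊢
  simp only [map_mul, hx, map_apply_ι, LinearMap.add_apply, Module.End.one_apply,
    LinearMap.smulRight_apply, extDerivation_ι_mul, map_add, map_smul, mul_add, add_mul,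
    smul_mul_assoc, hα, smul_zero, add_zero]
  abel

lemma ι_mul_mem_exteriorPower {d : ℕ} {z : ExteriorAlgebra R M} (v : M) (hz : z ∈ ⋀[R]^d M) :
    ι R v * z ∈ ⋀[R]^(d + 1) M := by
  rw [exteriorPower, pow_succ']
  exact Submodule.mul_mem_mul ⟨v, rfl⟩ hz

lemma extDerivation_mem_exteriorPower (X : End R M) {d : ℕ} {z : ExteriorAlgebra R M}
    (hz : z ∈ ⋀[R]^d M) : extDerivation X z ∈ ⋀[R]^d M := by
  induction hz using Submodule.pow_induction_on_left' with
  | algebraMap r =>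
    rw [Algebra.algebraMap_eq_smul_one, map_smul, extDerivation_one, smul_zero]
    exact Submodule.zero_mem _
  | add x y i _ _ hx hy => rw [map_add]; exact Submodule.add_mem _ hx hy
  | mem_mul m hm i x hx hx' =>
    obtain ⟨v, rfl⟩ := hm
    rw [extDerivation_ι_mul]
    exact Submodule.add_mem _ (ι_mul_mem_exteriorPower v hx') (ι_mul_mem_exteriorPower _ hx)

lemma extDerivation_smul_one (c : R) {d : ℕ} {z : ExteriorAlgebra R M} (hz : z ∈ ⋀[R]^d M) :
    extDerivation (c • 1) z = (d * c) • z := by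
  induction hz using Submodule.pow_induction_on_left' with
  | algebraMap r =>
    rw [Algebra.algebraMap_eq_smul_one, map_smul, extDerivation_one, Nat.cast_zero, zero_mul,
      zero_smul, smul_zero]
  | add x y i _ _ hx hy => rw [map_add, hx, hy, smul_add]
  | mem_mul m hm i x _ hx =>
    obtain ⟨v, rfl⟩ := hm
    rw [extDerivation_ι_mul, hx, LinearMap.smul_apply, Module.End.one_apply, map_smul,
      mul_smul_comm, smul_mul_assoc, ← add_smul, Nat.cast_succ, add_one_mul]

end ExteriorDerivation

section FaithfulDerivation

variable {F V : Type*} [Field F] [AddCommGroup V] [Module F V]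

lemma ιMulti_ne_zero {j : ℕ} {m : Fin j → V} (hm : LinearIndependent F m) : ιMulti F j m ≠ 0 := by
  intro h
  obtain ⟨g, hg⟩ := (Fintype.linearCombination F m).exists_leftInverse_of_injective
    (LinearMap.ker_eq_bot.2 (linearIndependent_iff_injective_fintypeLinearCombination.1 hm))
  have hgm : g ∘ m = Pi.basisFun F (Fin j) := funext fun i => by
    simpa [Fintype.linearCombination_apply_single] using LinearMap.congr_fun hg (Pi.single i 1)
  have hdet := exteriorPower.alternatingMapLinearEquiv_apply_ιMulti
    ((Pi.basisFun F (Fin j)).det.compLinearMap g) m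
  rw [show exteriorPower.ιMulti F j m = 0 from Subtype.ext h, map_zero,
    AlternatingMap.compLinearMap_apply, show (fun i => g (m i)) = _ from hgm,
    Basis.det_self] at hdet
  exact zero_ne_one hdet

lemma exists_ιMulti_mul_ne_zero [FiniteDimensional F V] (r : ℕ) : ∀ {j : ℕ} {m : Fin j → V},
    LinearIndependent F m → j + r ≤ finrank F V → ∃ z ∈ ⋀[F]^r V, ιMulti F j m * z ≠ 0 := by
  induction r with
  | zero =>
    intro j m hm _
    exact ⟨1, Submodule.one_le.1 (pow_zero (LinearMap.range (ι F))).ge,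
      by simpa using ιMulti_ne_zero hm⟩
  | succ r ih =>
    intro j m hm hr
    obtain ⟨x, hx⟩ := exists_linearIndependent_snoc_of_lt_finrank hm (by lia)
    obtain ⟨z, hz, hz0⟩ := ih hx (by lia)
    have hsnoc : ιMulti F (j + 1) (Fin.snoc m x : Fin (j + 1) → V) = ιMulti F j m * ι F x := by
      have happend : Fin.snoc m x = Fin.append m ![x] := (Fin.append_right_eq_snoc m ![x]).symm
      rw [happend, ← ιMulti_mul_ιMulti]
      simp
    exact ⟨ι F x * z, ι_mul_mem_exteriorPower x hz, by rwa [← mul_assoc, ← hsnoc]⟩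

lemma eq_zero_of_extDerivation_eq_zero [FiniteDimensional F V] {d : ℕ} (hd : (d : F) ≠ 0)
    (hd' : d < finrank F V) {X : End F V} (hX : ∀ z ∈ ⋀[F]^d V, extDerivation X z = 0) :
    X = 0 := by
  obtain ⟨r, rfl⟩ : ∃ r, d = r + 1 :=
    Nat.exists_eq_succ_of_ne_zero fun h => hd (by rw [h, Nat.cast_zero])
  obtain ⟨c, rfl⟩ : ∃ c : F, X = c • 1 := by
    refine LinearMap.exists_eq_smul_id_of_forall_notLinearIndependent fun v hv => ?_
    obtain ⟨z, hz, hz0⟩ := exists_ιMulti_mul_ne_zero r hv (by lia)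
    have hvz := hX _ (ι_mul_mem_exteriorPower v hz)
    rw [extDerivation_ι_mul] at hvz
    apply hz0
    simpa [mul_add, ← mul_assoc, ιMulti_succ_apply, Matrix.vecTail] using congrArg (ι F v * ·) hvz
  obtain ⟨z, hz, hz0⟩ := exists_ιMulti_mul_ne_zero (F := F) (V := V) (r + 1) (m := Fin.elim0)
    linearIndependent_empty_type (by lia)
  have hcz := extDerivation_smul_one c hz
  rw [hX z hz, eq_comm, smul_eq_zero, mul_eq_zero] at hcz
  have hz0' : z ≠ 0 := right_ne_zero_of_mul hz0
  rw [(hcz.resolve_right hz0').resolve_left hd, zero_smul]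

end FaithfulDerivation

section ExteriorPowerAction

variable {R M : Type*} [CommRing R] [AddCommGroup M] [Module R M]

/-- The Lie algebra action of endomorphisms on the `d`-th exterior power. -/
noncomputable def extDer (d : ℕ) : End R M →ₗ[R] End R (⋀[R]^d M) where
  toFun X := (extDerivation X).restrict fun _ hz => extDerivation_mem_exteriorPower X hz
  map_add' X Y := LinearMap.ext fun z => Subtype.ext
    (LinearMap.congr_fun (extDerivation_add X Y) z)
  map_smul' c X := LinearMap.ext fun z => Subtype.ext
    (LinearMap.congr_fun (extDerivation_smul c X) z)

lemma extDer_lie (d : ℕ) (X Y : End R M) : extDer d ⁅X, Y⁆ = ⁅extDer d X, extDer d Y⁆ :=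
  LinearMap.ext fun z => Subtype.ext (LinearMap.congr_fun (extDerivation_lie X Y) z)

lemma isIdempotentElem_extDer_smulRight (d : ℕ) {f : Dual R M} {α : M} (h : f α = 1) :
    IsIdempotentElem (extDer d (f.smulRight α)) :=
  LinearMap.ext fun z => Subtype.ext
    (LinearMap.congr_fun (isIdempotentElem_extDerivation_smulRight h) z)

lemma extMap_one_add_smul_smulRight (d : ℕ) (c : R) (f : Dual R M) (α : M) :
    extMap d (1 + c • f.smulRight α) = 1 + c • extDer d (f.smulRight α) := by
  have hc : c • f.smulRight α = (c • f).smulRight α := by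
    ext v
    simp [mul_smul]
  rw [← map_smul, hc]
  exact LinearMap.ext fun z => Subtype.ext (LinearMap.congr_fun (map_one_add_smulRight (c • f) α) z)

lemma extDer_injective {F V : Type*} [Field F] [AddCommGroup V] [Module F V]
    [FiniteDimensional F V] {d : ℕ} (hd : (d : F) ≠ 0) (hd' : d < finrank F V) :
    Function.Injective (extDer (R := F) (M := V) d) :=
  (injective_iff_map_eq_zero _).2 fun _ hX => eq_zero_of_extDerivation_eq_zero hd hd'
    fun z hz => congrArg Subtype.val (LinearMap.congr_fun hX ⟨z, hz⟩)

end ExteriorPowerAction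

section Intertwiners

variable {R M N : Type*} [CommRing R] [AddCommGroup M] [Module R M] [AddCommGroup N] [Module R N]
  {d d' : ℕ}

/-- The pairs of endomorphisms whose actions on exterior powers are intertwined by `e`. -/
noncomputable def intertwiners (e : ⋀[R]^d M ≃ₗ[R] ⋀[R]^d' N) :
    Submodule R (End R M × End R N) :=
  LinearMap.eqLocus ((e.conjAlgEquiv R).toLinearMap ∘ₗ extDer d ∘ₗ LinearMap.fst R _ _)
    (extDer d' ∘ₗ LinearMap.snd R _ _)

lemma mem_intertwiners {e : ⋀[R]^d M ≃ₗ[R] ⋀[R]^d' N} {Z : End R M × End R N} :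
    Z ∈ intertwiners e ↔ e.conjAlgEquiv R (extDer d Z.1) = extDer d' Z.2 := Iff.rfl

lemma lie_mem_intertwiners {e : ⋀[R]^d M ≃ₗ[R] ⋀[R]^d' N} {Y Z : End R M × End R N}
    (hY : Y ∈ intertwiners e) (hZ : Z ∈ intertwiners e) : ⁅Y, Z⁆ ∈ intertwiners e := by
  rw [mem_intertwiners] at hY hZ ⊢
  rw [show ⁅Y, Z⁆ = (⁅Y.1, Z.1⁆, ⁅Y.2, Z.2⁆) from rfl, extDer_lie, extDer_lie, ← hY, ← hZ]
  simp only [Ring.lie_def, map_sub, map_mul]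

lemma disjoint_intertwiners_ker_fst (e : ⋀[R]^d M ≃ₗ[R] ⋀[R]^d' N)
    (h : Function.Injective (extDer (R := R) (M := N) d')) :
    Disjoint (intertwiners e) (LinearMap.ker (LinearMap.fst R (End R M) (End R N))) := by
  rw [LinearMap.disjoint_ker]
  rintro ⟨X, Y⟩ hZ (rfl : X = 0)
  rw [mem_intertwiners, map_zero, map_zero] at hZ
  exact Prod.ext rfl ((map_eq_zero_iff _ h).1 hZ.symm)

lemma disjoint_intertwiners_ker_snd (e : ⋀[R]^d M ≃ₗ[R] ⋀[R]^d' N)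
    (h : Function.Injective (extDer (R := R) (M := M) d)) :
    Disjoint (intertwiners e) (LinearMap.ker (LinearMap.snd R (End R M) (End R N))) := by
  rw [LinearMap.disjoint_ker]
  rintro ⟨X, Y⟩ hZ (rfl : Y = 0)
  rw [mem_intertwiners, map_zero, map_eq_zero_iff _ (e.conjAlgEquiv R).injective,
    map_eq_zero_iff _ h] at hZ
  exact Prod.ext hZ rfl

end Intertwiners

section Reflections

variable {F V V₁ V₂ : Type*} [Field F] [AddCommGroup V] [Module F V] [AddCommGroup V₁]
  [Module F V₁] [AddCommGroup V₂] [Module F V₂]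

lemma IsDiagonalizable.exists_sub_one_apply_eq_smul {s : End F V} (hs : IsDiagonalizable s)
    (hs1 : s ≠ 1) : ∃ (v : V) (c : F), (s - 1) v = c • v ∧ c • v ≠ 0 := by
  by_contra! h
  refine hs1 (sub_eq_zero.1 (LinearMap.ker_eq_top.1 (top_le_iff.1 (hs.ge.trans ?_))))
  refine iSup_le fun μ v hv => ?_
  have hv' : (s - 1) v = (μ - 1) • v := by
    rw [LinearMap.sub_apply, End.mem_eigenspace_iff.1 hv, sub_smul, one_smul, End.one_apply]
  rw [LinearMap.mem_ker, hv', h v (μ - 1) hv']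

lemma IsGenReflection.exists_eq_one_add_smul_smulRight {s : End F V} (hs : IsGenReflection s) :
    ∃ (c : F) (f : Dual F V) (α : V), c ≠ 0 ∧ f α = 1 ∧ s = 1 + c • f.smulRight α := by
  obtain ⟨hdiag, hrank⟩ := hs
  have hs1 : s ≠ 1 := fun h => by
    rw [h, sub_self, LinearMap.range_zero, finrank_bot] at hrank
    exact zero_ne_one hrank
  obtain ⟨α, c, hα, hcα⟩ := hdiag.exists_sub_one_apply_eq_smul hs1
  obtain ⟨hc, hα0⟩ := smul_ne_zero_iff.1 hcα
  have hrange : LinearMap.range (s - 1) = F ∙ α :=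
    eq_span_singleton_of_mem_of_finrank_eq_one hrank
      ⟨c⁻¹ • α, by rw [map_smul, hα, inv_smul_smul₀ hc]⟩ hα0
  let g : V →ₗ[F] F ∙ α := (s - 1).codRestrict _ fun x => hrange ▸ LinearMap.mem_range_self _ x
  let coord := (LinearEquiv.coord F V α hα0).toLinearMap ∘ₗ g
  have hcoord x : coord x • α = (s - 1) x := LinearEquiv.coord_apply_smul F V α hα0 (g x)
  have hcoordα : coord α = c := smul_left_injective F hα0 ((hcoord α).trans hα)
  refine ⟨c, c⁻¹ • coord, α, hc, by simp [hcoordα, hc], LinearMap.ext fun x => ?_⟩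
  simp [smul_smul, hc, hcoord]

lemma eq_and_eq_of_smul_eq_smul_of_isIdempotentElem {A : Type*} [Ring A] [Algebra F A]
    {p q : A} {b c : F} (hp : IsIdempotentElem p) (hq : IsIdempotentElem q) (hb : b ≠ 0)
    (hp0 : p ≠ 0) (h : b • p = c • q) : b = c ∧ p = q := by
  have hsmul : b • b • p = c • b • p := calc
    b • b • p = (b • p) * (b • p) := by rw [smul_mul_smul_comm, hp.eq, mul_smul]
    _ = c • b • p := by rw [h, smul_mul_smul_comm, hq.eq, mul_smul]
  obtain rfl : b = c := smul_left_injective F (smul_ne_zero hb hp0) hsmul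
  exact ⟨rfl, smul_right_injective A hb h⟩

lemma exists_smulRight_mem_intertwiners {d₁ d₂ : ℕ} {e : ⋀[F]^d₁ V₁ ≃ₗ[F] ⋀[F]^d₂ V₂}
    (hinj : Function.Injective (extDer (R := F) (M := V₁) d₁)) {s₁ : End F V₁} {s₂ : End F V₂}
    (hs₁ : IsGenReflection s₁) (hs₂ : IsGenReflection s₂)
    (he : ∀ x, e (extMap d₁ s₁ x) = extMap d₂ s₂ (e x)) :
    ∃ (c : F) (f₁ : Dual F V₁) (α₁ : V₁) (f₂ : Dual F V₂) (α₂ : V₂), f₁ α₁ = 1 ∧ f₂ α₂ = 1 ∧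
      s₁ = 1 + c • f₁.smulRight α₁ ∧ s₂ = 1 + c • f₂.smulRight α₂ ∧
      (f₁.smulRight α₁, f₂.smulRight α₂) ∈ intertwiners e := by
  obtain ⟨c₁, f₁, α₁, hc₁, h₁, rfl⟩ := hs₁.exists_eq_one_add_smul_smulRight
  obtain ⟨c₂, f₂, α₂, -, h₂, rfl⟩ := hs₂.exists_eq_one_add_smul_smulRight
  have hconj : c₁ • e.conjAlgEquiv F (extDer d₁ (f₁.smulRight α₁)) =
      c₂ • extDer d₂ (f₂.smulRight α₂) := LinearMap.ext fun y => by
    simpa [extMap_one_add_smul_smulRight] using he (e.symm y)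
  have hne : e.conjAlgEquiv F (extDer d₁ (f₁.smulRight α₁)) ≠ 0 := by
    rw [Ne, map_eq_zero_iff _ (e.conjAlgEquiv F).injective, map_eq_zero_iff _ hinj]
    exact (isRankOneIdem_smulRight h₁).ne_zero
  obtain ⟨rfl, hmem⟩ := eq_and_eq_of_smul_eq_smul_of_isIdempotentElem
    (A := End F (⋀[F]^d₂ V₂)) ((isIdempotentElem_extDer_smulRight d₁ h₁).map (e.conjAlgEquiv F))
    (isIdempotentElem_extDer_smulRight d₂ h₂) hc₁ hne hconj
  exact ⟨c₁, f₁, α₁, f₂, α₂, h₁, h₂, rfl, rfl, mem_intertwiners.2 hmem⟩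

end Reflections

section Representations

variable {F W V V₁ V₂ ι : Type*} [Field F] [Group W] [AddCommGroup V] [Module F V]
  [AddCommGroup V₁] [Module F V₁] [AddCommGroup V₂] [Module F V₂] {s : ι → W}

lemma forall_mem_of_closure_eq_top [FiniteDimensional F V]
    (hgen : Subgroup.closure (Set.range s) = ⊤) {ρ : Representation F W V} {U : Submodule F V}
    (hU : ∀ i, ∀ v ∈ U, ρ (s i) v ∈ U) (w : W) : ∀ v ∈ U, ρ w v ∈ U := by
  have hw : w ∈ Subgroup.closure (Set.range s) := hgen ▸ Subgroup.mem_top w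
  induction hw using Subgroup.closure_induction with
  | mem x hx =>
    obtain ⟨i, rfl⟩ := hx
    exact hU i
  | one => simp
  | mul x y _ _ hx hy =>
    intro v hv
    rw [map_mul]
    exact hx _ (hy _ hv)
  | inv x _ hx =>
    have hmap : U.map (ρ x) = U := Submodule.eq_of_le_of_finrank_eq
      (Submodule.map_le_iff_le_comap.2 hx)
      (U.equivMapOfInjective _ (ρ.apply_bijective x).injective).finrank_eq.symm
    intro v hv
    rw [← hmap] at hv
    obtain ⟨u, hu, rfl⟩ := hv
    simpa using hu

lemma nonempty_of_irreducible (hgen : Subgroup.closure (Set.range s) = ⊤)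
    {ρ : Representation F W V}
    (hirr : ∀ U : Submodule F V, (∀ w : W, ∀ v ∈ U, ρ w v ∈ U) → U = ⊥ ∨ U = ⊤)
    (hdim : 1 < finrank F V) : Nonempty ι := by
  by_contra! hι
  have hW : Subsingleton W := by
    rw [← Subgroup.subsingleton_iff, ← subsingleton_iff_bot_eq_top, ← hgen, Set.range_eq_empty,
      Subgroup.closure_empty]
  have := Module.nontrivial_of_finrank_pos (R := F) (zero_lt_one.trans hdim)
  obtain ⟨v, hv⟩ := exists_ne (0 : V)
  have hline := finrank_span_singleton (K := F) hv
  rcases hirr (F ∙ v) fun w u hu => by rwa [Subsingleton.elim w 1, map_one] with h | h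
  · exact hv (Submodule.span_singleton_eq_bot.1 h)
  · rw [h, finrank_top] at hline
    exact hdim.ne' hline

lemma bijective_domRestrict_of_irreducible {σ : Representation F W V₁} {ρ : Representation F W V}
    (hirr : ∀ U : Submodule F V, (∀ w : W, ∀ v ∈ U, ρ w v ∈ U) → U = ⊥ ∨ U = ⊤)
    {g : V₁ →ₗ[F] V} (hg : ∀ w v, g (σ w v) = ρ w (g v)) {M : Submodule F V₁}
    (hM : ∀ w, ∀ v ∈ M, σ w v ∈ M) (hM0 : M ≠ ⊥) (hker : Disjoint M (LinearMap.ker g)) :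
    Function.Bijective (g.domRestrict M) := by
  have hmap0 : M.map g ≠ ⊥ := fun h =>
    hM0 (hker.eq_bot_of_le (LinearMap.le_ker_iff_map.2 h))
  have hmap : M.map g = ⊤ := (hirr _ fun w => by
    rintro _ ⟨v, hv, rfl⟩
    exact ⟨σ w v, hM w v hv, hg w v⟩).resolve_left hmap0
  refine ⟨LinearMap.injective_domRestrict_iff.2 hker, ?_⟩
  rw [← LinearMap.range_eq_top, LinearMap.range_domRestrict, hmap]

lemma exists_equivariant_equiv_of_graph {ρ₁ : Representation F W V₁} {ρ₂ : Representation F W V₂}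
    (hirr₁ : ∀ U : Submodule F V₁, (∀ w : W, ∀ v ∈ U, ρ₁ w v ∈ U) → U = ⊥ ∨ U = ⊤)
    (hirr₂ : ∀ U : Submodule F V₂, (∀ w : W, ∀ v ∈ U, ρ₂ w v ∈ U) → U = ⊥ ∨ U = ⊤)
    {M : Submodule F (V₁ × V₂)} (hM : ∀ w, ∀ v ∈ M, ρ₁.prod ρ₂ w v ∈ M) (hM0 : M ≠ ⊥)
    (hfst : Disjoint M (LinearMap.ker (LinearMap.fst F V₁ V₂)))
    (hsnd : Disjoint M (LinearMap.ker (LinearMap.snd F V₁ V₂))) :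
    ∃ f : V₁ ≃ₗ[F] V₂, ∀ (w : W) (v : V₁), f (ρ₁ w v) = ρ₂ w (f v) := by
  obtain ⟨f, rfl⟩ := Submodule.exists_equiv_eq_graph
    (bijective_domRestrict_of_irreducible hirr₁ (fun _ _ => rfl) hM hM0 hfst)
    (bijective_domRestrict_of_irreducible hirr₂ (fun _ _ => rfl) hM hM0 hsnd)
  exact ⟨f, fun w v => ((LinearMap.mem_graph_iff _ _).1 (hM w (v, f v) rfl)).symm⟩

end Representations

theorem stmt_19_general {F V₁ V₂ W ι : Type*} [Field F] [NeZero (2 : F)]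
    [AddCommGroup V₁] [Module F V₁] [AddCommGroup V₂] [Module F V₂] [Group W]
    (s : ι → W) (hgen : Subgroup.closure (Set.range s) = ⊤)
    (ρ₁ : Representation F W V₁) (ρ₂ : Representation F W V₂)
    (hirr₁ : ∀ U : Submodule F V₁, (∀ w : W, ∀ v ∈ U, ρ₁ w v ∈ U) → U = ⊥ ∨ U = ⊤)
    (hirr₂ : ∀ U : Submodule F V₂, (∀ w : W, ∀ v ∈ U, ρ₂ w v ∈ U) → U = ⊥ ∨ U = ⊤)
    (hrefl₁ : ∀ i, IsGenReflection (ρ₁ (s i)))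
    (hrefl₂ : ∀ i, IsGenReflection (ρ₂ (s i)))
    (d₁ d₂ : ℕ) (hd₁ : (d₁ : F) ≠ 0) (hd₁' : d₁ < finrank F V₁)
    (hd₂ : (d₂ : F) ≠ 0) (hd₂' : d₂ < finrank F V₂)
    (e : ↥(⋀[F]^d₁ V₁) ≃ₗ[F] ↥(⋀[F]^d₂ V₂))
    (he : ∀ (w : W) (x : ↥(⋀[F]^d₁ V₁)), e (extMap d₁ (ρ₁ w) x) = extMap d₂ (ρ₂ w) (e x)) :
    ∃ f : V₁ ≃ₗ[F] V₂, ∀ (w : W) (v : V₁), f (ρ₁ w v) = ρ₂ w (f v) := by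
  have := Module.finite_of_finrank_pos (R := F) (pos_of_gt hd₁')
  have := Module.finite_of_finrank_pos (R := F) (pos_of_gt hd₂')
  have hinj₁ := extDer_injective hd₁ hd₁'
  have hinj₂ := extDer_injective hd₂ hd₂'
  have hd₁_pos : 0 < d₁ := Nat.pos_of_ne_zero fun h => hd₁ (by rw [h, Nat.cast_zero])
  have := nonempty_of_irreducible hgen hirr₁ (by lia)
  choose c f₁ α₁ f₂ α₂ h₁ h₂ hs₁ hs₂ hmem using fun i =>
    exists_smulRight_mem_intertwiners hinj₁ (hrefl₁ i) (hrefl₂ i) (he (s i))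
  obtain ⟨M, hM0, hfst, hsnd, hM⟩ := exists_invariant_graph
    (fun _ hY _ hZ => lie_mem_intertwiners hY hZ) (disjoint_intertwiners_ker_fst e hinj₂)
    (disjoint_intertwiners_ker_snd e hinj₁) h₁ h₂ hmem
  have hMs : ∀ i, ∀ v ∈ M, ρ₁.prod ρ₂ (s i) v ∈ M := fun i v hv => by
    convert M.add_mem hv (M.smul_mem (c i) (hM i v hv)) using 1
    ext <;> simp [hs₁, hs₂]
  exact exists_equivariant_equiv_of_graph hirr₁ hirr₂ (forall_mem_of_closure_eq_top hgen hMs)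
    hM0 hfst hsnd

/-- If `⋀^{d₁} V₁ ≅ ⋀^{d₂} V₂` as `W`-modules for some `1 ≤ dᵢ ≤ dim Vᵢ - 1`, then the two
irreducible reflection representations are themselves isomorphic. -/
theorem stmt_19 {F V₁ V₂ W : Type*} [Field F] [CharZero F]
    [AddCommGroup V₁] [Module F V₁] [FiniteDimensional F V₁] [Nontrivial V₁]
    [AddCommGroup V₂] [Module F V₂] [FiniteDimensional F V₂] [Nontrivial V₂] [Group W]
    (k : ℕ) (s : Fin k → W) (hgen : Subgroup.closure (Set.range s) = ⊤)
    (ρ₁ : Representation F W V₁) (ρ₂ : Representation F W V₂)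
    (hirr₁ : ∀ U : Submodule F V₁, (∀ w : W, ∀ v ∈ U, ρ₁ w v ∈ U) → U = ⊥ ∨ U = ⊤)
    (hirr₂ : ∀ U : Submodule F V₂, (∀ w : W, ∀ v ∈ U, ρ₂ w v ∈ U) → U = ⊥ ∨ U = ⊤)
    (hrefl₁ : ∀ i, IsGenReflection (ρ₁ (s i)))
    (hrefl₂ : ∀ i, IsGenReflection (ρ₂ (s i)))
    (d₁ d₂ : ℕ) (hd₁ : 1 ≤ d₁) (hd₁' : d₁ ≤ Module.finrank F V₁ - 1)
    (hd₂ : 1 ≤ d₂) (hd₂' : d₂ ≤ Module.finrank F V₂ - 1)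
    (e : ↥(⋀[F]^d₁ V₁) ≃ₗ[F] ↥(⋀[F]^d₂ V₂))
    (he : ∀ (w : W) (x : ↥(⋀[F]^d₁ V₁)), e (extMap d₁ (ρ₁ w) x) = extMap d₂ (ρ₂ w) (e x)) :
    ∃ f : V₁ ≃ₗ[F] V₂, ∀ (w : W) (v : V₁), f (ρ₁ w v) = ρ₂ w (f v) := by
  exact stmt_19_general s hgen ρ₁ ρ₂ hirr₁ hirr₂ hrefl₁ hrefl₂ d₁ d₂
    (Nat.cast_ne_zero.2 (by lia)) (by lia) (Nat.cast_ne_zero.2 (by lia)) (by lia) e he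
end
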